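/- arXiv:1405.6477 — 14 statements merged into one kernel-verified Lean document; each statement's English description precedes it below -/
import Mathlib

section
/- For every complex number λ, the characteristic determinant of the 3n×3n matrix A factors through an n×n determinant: det(λ·I_{3n} − A) = det( (λ−1)²(λ−1+p)·I_n + ((λ−1)κ₁ + p(κ₁−κ₂))·τ·L·R ), where the entries of A, L, R are viewed as complex numbers. -/
open Matrix

/-- The 3n×3n block matrix A = [[I, τR, 0], [−κ₁L, I, −κ₂I], [−pL, 0, (1−p)I]]. -/
def Amat (n : ℕ) (L R : Matrix (Fin n) (Fin n) ℝ) (τ κ₁ κ₂ p : ℝ) :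
    Matrix (Fin 3 × Fin n) (Fin 3 × Fin n) ℝ :=
  Matrix.of fun a b =>
    ![![(1 : Matrix (Fin n) (Fin n) ℝ), τ • R, 0],
      ![(-κ₁) • L, 1, (-κ₂) • (1 : Matrix (Fin n) (Fin n) ℝ)],
      ![(-p) • L, 0, (1 - p) • (1 : Matrix (Fin n) (Fin n) ℝ)]] a.1 b.1 a.2 b.2

def blockEquiv (n : ℕ) : Fin n ⊕ (Fin n ⊕ Fin n) ≃ Fin 3 × Fin n where
  toFun := Sum.elim (fun i => (0, i)) (Sum.elim (fun i => (1, i)) (fun i => (2, i)))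
  invFun a := ![Sum.inl a.2, Sum.inr (Sum.inl a.2), Sum.inr (Sum.inr a.2)] a.1
  left_inv := by rintro (i | i | i) <;> rfl
  right_inv := by
    rintro ⟨a, i⟩
    fin_cases a <;> rfl

theorem Amat_entries (n : ℕ) (L R : Matrix (Fin n) (Fin n) ℝ) (τ κ₁ κ₂ p : ℝ) (i j : Fin n) :
    Amat n L R τ κ₁ κ₂ p (0, i) (0, j) = (1 : Matrix (Fin n) (Fin n) ℝ) i j ∧
    Amat n L R τ κ₁ κ₂ p (0, i) (1, j) = τ * R i j ∧
    Amat n L R τ κ₁ κ₂ p (0, i) (2, j) = 0 ∧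
    Amat n L R τ κ₁ κ₂ p (1, i) (0, j) = -κ₁ * L i j ∧
    Amat n L R τ κ₁ κ₂ p (1, i) (1, j) = (1 : Matrix (Fin n) (Fin n) ℝ) i j ∧
    Amat n L R τ κ₁ κ₂ p (1, i) (2, j) = -κ₂ * (1 : Matrix (Fin n) (Fin n) ℝ) i j ∧
    Amat n L R τ κ₁ κ₂ p (2, i) (0, j) = -p * L i j ∧
    Amat n L R τ κ₁ κ₂ p (2, i) (1, j) = 0 ∧
    Amat n L R τ κ₁ κ₂ p (2, i) (2, j) = (1 - p) * (1 : Matrix (Fin n) (Fin n) ℝ) i j :=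
  ⟨rfl, rfl, rfl, rfl, rfl, rfl, rfl, rfl, rfl⟩

theorem block_det (n : ℕ) (L R : Matrix (Fin n) (Fin n) ℂ) (t k₁ k₂ p x y : ℂ)
    (hx : x ≠ 0) (hy : y ≠ 0) :
    (Matrix.fromBlocks (x • (1 : Matrix (Fin n) (Fin n) ℂ))
      (Matrix.fromCols (-(t • R)) 0) (Matrix.fromRows (k₁ • L) (p • L))
      (Matrix.fromBlocks (x • (1 : Matrix (Fin n) (Fin n) ℂ))
        (k₂ • (1 : Matrix (Fin n) (Fin n) ℂ)) 0 (y • (1 : Matrix (Fin n) (Fin n) ℂ)))).det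
    = ((x ^ 2 * y) • (1 : Matrix (Fin n) (Fin n) ℂ)
        + ((k₁ * y - k₂ * p) * t) • (L * R)).det := by
  have hinv : ∀ (m : ℕ) (z : ℂ), z ≠ 0 → ∃ i : Invertible (z • (1 : Matrix (Fin m) (Fin m) ℂ)),
      i.invOf = z⁻¹ • (1 : Matrix (Fin m) (Fin m) ℂ) := fun m z hz =>
    ⟨⟨z⁻¹ • 1, by simp [smul_smul, hz], by simp [smul_smul, hz]⟩, rfl⟩
  obtain ⟨ix, hix⟩ := hinv n x hx
  obtain ⟨iy, hiy⟩ := hinv n y hy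
  rw [Matrix.det_fromBlocks₁₁]
  have h : Matrix.fromBlocks (x • (1 : Matrix (Fin n) (Fin n) ℂ))
        (k₂ • (1 : Matrix (Fin n) (Fin n) ℂ)) 0 (y • (1 : Matrix (Fin n) (Fin n) ℂ))
      - Matrix.fromRows (k₁ • L) (p • L) * ⅟(x • (1 : Matrix (Fin n) (Fin n) ℂ))
        * Matrix.fromCols (-(t • R)) 0
      = Matrix.fromBlocks (x • 1 + (k₁ * t * x⁻¹) • (L * R)) (k₂ • 1)
        ((p * t * x⁻¹) • (L * R)) (y • (1 : Matrix (Fin n) (Fin n) ℂ)) := by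
    rw [hix]
    simp only [Matrix.mul_smul, Matrix.mul_one, Matrix.smul_mul, Matrix.fromRows_mul_fromCols]
    ext (i | i) (j | j) <;> simp <;> ring
  rw [h, Matrix.det_fromBlocks₂₂, hiy, ← Matrix.det_mul, ← Matrix.det_mul]
  congr 1
  simp only [Matrix.mul_smul, Matrix.mul_one, Matrix.one_mul, Matrix.smul_mul]
  ext i j
  simp
  field_simp
  ring

theorem stmt0 (n : ℕ) (hn : 1 ≤ n) (L R : Matrix (Fin n) (Fin n) ℝ)
    (hRdiag : ∀ i j, i ≠ j → R i j = 0) (hRpos : ∀ i, 0 < R i i)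
    (τ κ₁ κ₂ p : ℝ) (lam : ℂ) :
    (lam • (1 : Matrix (Fin 3 × Fin n) (Fin 3 × Fin n) ℂ)
        - (Amat n L R τ κ₁ κ₂ p).map ((↑) : ℝ → ℂ)).det
      = (((lam - 1) ^ 2 * (lam - 1 + (p : ℂ))) • (1 : Matrix (Fin n) (Fin n) ℂ)
          + (((lam - 1) * (κ₁ : ℂ) + (p : ℂ) * ((κ₁ : ℂ) - (κ₂ : ℂ))) * (τ : ℂ))
              • ((L * R).map ((↑) : ℝ → ℂ))).det := by
  have hd : Dense (({1, 1 - (p : ℂ)} : Set ℂ)ᶜ) :=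
    Set.Countable.dense_compl ℝ (Set.Finite.countable (Set.toFinite _))
  revert lam
  rw [← funext_iff]
  refine Continuous.ext_on hd ?_ ?_ ?_
  · fun_prop
  · fun_prop
  intro l hl
  simp only [Set.mem_compl_iff, Set.mem_insert_iff, Set.mem_singleton_iff, not_or] at hl
  have hx : l - 1 ≠ 0 := sub_ne_zero.mpr hl.1
  have hy : l - 1 + (p : ℂ) ≠ 0 := fun h => hl.2 (by linear_combination h)
  have key := block_det n (L.map ((↑) : ℝ → ℂ)) (R.map ((↑) : ℝ → ℂ)) τ κ₁ κ₂ p _ _ hx hy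
  have hm : (L * R).map ((↑) : ℝ → ℂ) = L.map ((↑) : ℝ → ℂ) * R.map ((↑) : ℝ → ℂ) :=
    Matrix.map_mul (f := Complex.ofRealHom)
  show Matrix.det _ = Matrix.det _
  rw [hm]
  have e1 : (l - 1) * (κ₁ : ℂ) + (p : ℂ) * ((κ₁ : ℂ) - (κ₂ : ℂ))
      = κ₁ * (l - 1 + p) - κ₂ * p := by ring
  rw [e1, ← key, ← Matrix.det_submatrix_equiv_self (blockEquiv n)]
  congr 1
  ext (i | i | i) (j | j | j) <;>
    simp [blockEquiv, Amat_entries n L R τ κ₁ κ₂ p i j, Matrix.one_apply] <;> (try split_ifs) <;> simp <;> ring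
end

section
/- Assume p ≠ 0, τ ≠ 0 and κ₁ ≠ κ₂. Then the algebraic multiplicity of 1 as a root of the characteristic polynomial of A (over ℂ) equals twice the algebraic multiplicity of 0 as an eigenvalue of L·R. In particular, λ = 1 is an eigenvalue of A of algebraic multiplicity exactly 2 if and only if 0 is a simple eigenvalue of L·R. -/
open Matrix Polynomial

theorem det_lin_aux {n : ℕ} (N : Matrix (Fin n) (Fin n) ℂ) (a b : ℂ) :
    (a • (1 : Matrix (Fin n) (Fin n) ℂ) + b • N).det
      = (N.charpoly.roots.map (fun μ => a + b * μ)).prod := by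
  have hs := IsAlgClosed.splits N.charpoly
  have hcard : N.charpoly.roots.card = n := by
    rw [← hs.natDegree_eq_card_roots, Matrix.charpoly_natDegree_eq_dim, Fintype.card_fin]
  by_cases hb : b = 0
  · subst hb
    simp [hcard]
  · have h1 : a • (1 : Matrix (Fin n) (Fin n) ℂ) + b • N
        = (-b) • (Matrix.scalar (Fin n) (-(a / b)) - N) := by
      ext i j
      by_cases hij : i = j
      · subst hij
        simp; field_simp; ring
      · simp [hij]
    rw [h1, Matrix.det_smul, ← Matrix.eval_charpoly,
      hs.eval_eq_prod_roots_of_monic (Matrix.charpoly_monic N), Fintype.card_fin]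
    have hpow : (-b) ^ n = (N.charpoly.roots.map (fun _ => -b)).prod := by simp [hcard]
    rw [hpow, ← Multiset.prod_map_mul]
    congr 1
    apply Multiset.map_congr rfl
    intro x _
    field_simp
    ring

theorem block_det_aux {n : ℕ} (L R : Matrix (Fin n) (Fin n) ℂ) (t k l p s : ℂ)
    (hs : s ≠ 0) (hsp : s + p ≠ 0) :
    (fromBlocks (fromBlocks (s • (1 : Matrix (Fin n) (Fin n) ℂ)) ((-t) • R) (k • L) (s • 1))
      (fromRows 0 (l • (1 : Matrix (Fin n) (Fin n) ℂ))) (fromCols (p • L) 0)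
      ((s + p) • (1 : Matrix (Fin n) (Fin n) ℂ))).det
    = ((s ^ 2 * (s + p)) • (1 : Matrix (Fin n) (Fin n) ℂ)
        + (t * (k * s + p * (k - l))) • (L * R)).det := by
  let i1 : Invertible ((s + p) • (1 : Matrix (Fin n) (Fin n) ℂ)) :=
    ⟨(s + p)⁻¹ • 1, by simp [smul_smul, hsp], by simp [smul_smul, hsp]⟩
  let i2 : Invertible (s • (1 : Matrix (Fin n) (Fin n) ℂ)) :=
    ⟨s⁻¹ • 1, by simp [smul_smul, hs], by simp [smul_smul, hs]⟩
  have e1 : ⅟((s + p) • (1 : Matrix (Fin n) (Fin n) ℂ)) = (s + p)⁻¹ • 1 := rfl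
  have e2 : ⅟(s • (1 : Matrix (Fin n) (Fin n) ℂ)) = s⁻¹ • 1 := rfl
  have h : fromBlocks (s • (1 : Matrix (Fin n) (Fin n) ℂ)) ((-t) • R) (k • L) (s • 1)
      - fromRows 0 (l • (1 : Matrix (Fin n) (Fin n) ℂ)) * ((s + p)⁻¹ • (1 : Matrix (Fin n) (Fin n) ℂ))
        * fromCols (p • L) 0
      = fromBlocks (s • (1 : Matrix (Fin n) (Fin n) ℂ)) ((-t) • R)
        ((k - l * (s + p)⁻¹ * p) • L) (s • 1) := by
    rw [fromRows_mul, fromRows_mul_fromCols]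
    rw [sub_eq_add_neg, fromBlocks_neg, fromBlocks_add]
    congr 1 <;> simp [smul_smul, sub_eq_add_neg]
    rw [add_smul, neg_smul]
    congr 3; ring
  rw [det_fromBlocks₂₂, e1, h, det_fromBlocks₁₁, e2, ← det_mul, ← det_mul]
  congr 1
  simp only [smul_mul_assoc, one_mul, mul_one, mul_smul_comm, smul_smul, smul_sub]
  rw [sub_eq_add_neg, ← neg_smul]
  congr 2
  · ring
  · field_simp
    ring

/-- The splitting of the index set into three blocks. -/
def idxEquiv (n : ℕ) : (Fin n ⊕ Fin n) ⊕ Fin n ≃ Fin 3 × Fin n where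
  toFun x := Sum.elim (Sum.elim (fun i => (0, i)) (fun i => (1, i))) (fun i => (2, i)) x
  invFun a := ![Sum.inl (Sum.inl a.2), Sum.inl (Sum.inr a.2), Sum.inr a.2] a.1
  left_inv := by rintro ((i | i) | i) <;> rfl
  right_inv := by rintro ⟨a, i⟩; fin_cases a <;> rfl

theorem Amat_block_aux (n : ℕ) (L R : Matrix (Fin n) (Fin n) ℝ) (τ κ₁ κ₂ p : ℝ) :
    (Amat n L R τ κ₁ κ₂ p).submatrix (idxEquiv n) (idxEquiv n) =
    fromBlocks (fromBlocks 1 (τ • R) ((-κ₁) • L) 1)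
      (fromRows 0 ((-κ₂) • (1 : Matrix (Fin n) (Fin n) ℝ))) (fromCols ((-p) • L) 0)
      ((1 - p) • (1 : Matrix (Fin n) (Fin n) ℝ)) := by
  ext i j
  rcases i with (i | i) | i <;> rcases j with (j | j) | j <;> rfl

theorem Amat_eval_aux (n : ℕ) (L R : Matrix (Fin n) (Fin n) ℝ) (τ κ₁ κ₂ p : ℝ) (s : ℂ)
    (hs : s ≠ 0) (hsp : s + p ≠ 0) :
    ((Amat n L R τ κ₁ κ₂ p).map ((↑) : ℝ → ℂ)).charpoly.eval (s + 1)
    = ((s ^ 2 * (s + p)) • (1 : Matrix (Fin n) (Fin n) ℂ)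
        + ((τ : ℂ) * (κ₁ * s + p * (κ₁ - κ₂))) • ((L * R).map ((↑) : ℝ → ℂ))).det := by
  have hLR : (L * R).map ((↑) : ℝ → ℂ) = L.map ((↑) : ℝ → ℂ) * R.map ((↑) : ℝ → ℂ) :=
    Matrix.map_mul (f := Complex.ofRealHom)
  rw [hLR, ← block_det_aux _ _ _ _ _ _ _ hs hsp, Matrix.eval_charpoly,
    ← Matrix.det_submatrix_equiv_self (idxEquiv n)]
  have hsub : (Matrix.scalar (Fin 3 × Fin n) (s + 1)
        - (Amat n L R τ κ₁ κ₂ p).map ((↑) : ℝ → ℂ)).submatrix (idxEquiv n) (idxEquiv n)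
      = Matrix.scalar _ (s + 1)
        - ((Amat n L R τ κ₁ κ₂ p).submatrix (idxEquiv n) (idxEquiv n)).map ((↑) : ℝ → ℂ) := by
    ext i j
    simp [Matrix.diagonal_apply]
  rw [hsub, Amat_block_aux]
  congr 1
  ext i j
  rcases i with (i | i) | i <;> rcases j with (j | j) | j <;>
    simp [Matrix.one_apply, Matrix.diagonal_apply] <;>
    split_ifs <;> simp <;> ring

theorem mult_aux (S : Multiset ℂ) (t k c p : ℂ) (hp : p ≠ 0) (htc : t * c ≠ 0) :
    (S.map (fun μ => (X ^ 2 * (X + C p) + C t * (C k * X + C c) * C μ : ℂ[X]))).prod ≠ 0 ∧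
    (S.map (fun μ => (X ^ 2 * (X + C p) + C t * (C k * X + C c) * C μ : ℂ[X]))).prod.rootMultiplicity 0
      = 2 * S.count 0 := by
  have hXp : (X + C p : ℂ[X]) ≠ 0 := X_add_C_ne_zero p
  have h0 : (X ^ 2 * (X + C p) : ℂ[X]) ≠ 0 := mul_ne_zero (pow_ne_zero _ X_ne_zero) hXp
  induction S using Multiset.induction with
  | empty => simp
  | cons μ S ih =>
    obtain ⟨ih1, ih2⟩ := ih
    simp only [Multiset.map_cons, Multiset.prod_cons]
    by_cases hμ : μ = 0
    · subst hμ
      simp only [map_zero, mul_zero, add_zero]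
      refine ⟨mul_ne_zero h0 ih1, ?_⟩
      rw [rootMultiplicity_mul (mul_ne_zero h0 ih1), ih2, rootMultiplicity_mul h0,
        rootMultiplicity_eq_zero (p := X + C p) (by simpa using hp)]
      have : rootMultiplicity 0 (X ^ 2 : ℂ[X]) = 2 := by
        simpa using rootMultiplicity_X_sub_C_pow (0 : ℂ) 2
      rw [this, Multiset.count_cons_self]
      ring
    · have hr : ¬ IsRoot (X ^ 2 * (X + C p) + C t * (C k * X + C c) * C μ : ℂ[X]) 0 := by
        simp only [IsRoot.def]
        simp at htc ⊢
        tauto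
      have hne : (X ^ 2 * (X + C p) + C t * (C k * X + C c) * C μ : ℂ[X]) ≠ 0 := by
        intro h; rw [h] at hr; simp at hr
      refine ⟨mul_ne_zero hne ih1, ?_⟩
      rw [rootMultiplicity_mul (mul_ne_zero hne ih1), ih2, rootMultiplicity_eq_zero hr,
        Multiset.count_cons_of_ne (Ne.symm hμ), zero_add]

theorem stmt2 (n : ℕ) (hn : 1 ≤ n) (L R : Matrix (Fin n) (Fin n) ℝ)
    (hRdiag : ∀ i j, i ≠ j → R i j = 0) (hRpos : ∀ i, 0 < R i i)
    (τ κ₁ κ₂ p : ℝ) (hp : p ≠ 0) (hτ : τ ≠ 0) (hκ : κ₁ ≠ κ₂) :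
    (((Amat n L R τ κ₁ κ₂ p).map ((↑) : ℝ → ℂ)).charpoly.rootMultiplicity 1
        = 2 * ((L * R).map ((↑) : ℝ → ℂ)).charpoly.rootMultiplicity 0)
    ∧ ((((Amat n L R τ κ₁ κ₂ p).map ((↑) : ℝ → ℂ)).charpoly.rootMultiplicity 1 = 2
        ↔ ((L * R).map ((↑) : ℝ → ℂ)).charpoly.rootMultiplicity 0 = 1)) := by
  have key : ((Amat n L R τ κ₁ κ₂ p).map ((↑) : ℝ → ℂ)).charpoly.rootMultiplicity 1
        = 2 * ((L * R).map ((↑) : ℝ → ℂ)).charpoly.rootMultiplicity 0 := by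
    have hpc : (p : ℂ) ≠ 0 := by exact_mod_cast hp
    have htc : (τ : ℂ) * (p * (κ₁ - κ₂)) ≠ 0 := by
      refine mul_ne_zero (by exact_mod_cast hτ) (mul_ne_zero hpc (sub_ne_zero.2 ?_))
      exact_mod_cast hκ
    have heq : ((Amat n L R τ κ₁ κ₂ p).map ((↑) : ℝ → ℂ)).charpoly.comp (X + C 1)
        = (((L * R).map ((↑) : ℝ → ℂ)).charpoly.roots.map (fun μ =>
          (X ^ 2 * (X + C (p : ℂ)) + C (τ : ℂ) * (C (κ₁ : ℂ) * X + C ((p : ℂ) * (κ₁ - κ₂))) * C μ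
            : ℂ[X]))).prod := by
      apply Polynomial.eq_of_infinite_eval_eq
      refine Set.Infinite.mono ?_ (Set.Finite.infinite_compl (Set.toFinite {(0 : ℂ), -(p : ℂ)}))
      intro s hs
      simp only [Set.mem_compl_iff, Set.mem_insert_iff, Set.mem_singleton_iff, not_or] at hs
      have hsp : s + p ≠ 0 := fun h => hs.2 (eq_neg_of_add_eq_zero_left h)
      simp only [Set.mem_setOf_eq, eval_comp, eval_add, eval_X, eval_C]
      rw [Amat_eval_aux n L R τ κ₁ κ₂ p s hs.1 hsp, det_lin_aux, eval_multiset_prod,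
        Multiset.map_map]
      congr 1
      apply Multiset.map_congr rfl
      intro x _
      simp
    rw [rootMultiplicity_eq_rootMultiplicity, heq, (mult_aux _ _ _ _ _ hpc htc).2, count_roots]
  refine ⟨key, ?_⟩
  rw [key]
  omega
end

section
/- Assume L·1_n = 0, τ ≠ 0 and p ≠ 0. Define the vectors ζ₁ = (1_n, 0_n, 0_n), ζ₂ = (1_n, (1/τ)R⁻¹1_n, 0_n), and ζ₃ = (−(τκ₂/p²)1_n, (κ₂/p)R⁻¹1_n, R⁻¹1_n) in ℝ^{3n}. Then A·ζ₁ = ζ₁, A·ζ₂ = ζ₂ + ζ₁ (so (ζ₁, ζ₂) is a right Jordan chain of A for the eigenvalue 1), and A·ζ₃ = (1−p)·ζ₃. -/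
open Matrix

/-- The stacked vector (u, v, w) ∈ ℝ^{3n}. -/
def vec3 {n : ℕ} (u v w : Fin n → ℝ) : Fin 3 × Fin n → ℝ :=
  fun a => ![u, v, w] a.1 a.2

theorem Amat_mulVec_vec3 (n : ℕ) (L R : Matrix (Fin n) (Fin n) ℝ) (τ κ₁ κ₂ p : ℝ)
    (u v w : Fin n → ℝ) :
    (Amat n L R τ κ₁ κ₂ p) *ᵥ (vec3 u v w)
      = vec3 (u + τ • (R *ᵥ v)) ((-κ₁) • (L *ᵥ u) + v + (-κ₂) • w)
          ((-p) • (L *ᵥ u) + (1 - p) • w) := by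
  have key : ∀ (M : Fin 3 → Matrix (Fin n) (Fin n) ℝ) (i : Fin n),
      ∑ x : Fin 3 × Fin n, M x.1 i x.2 * vec3 u v w x
        = (M 0 *ᵥ u) i + (M 1 *ᵥ v) i + (M 2 *ᵥ w) i := by
    intro M i
    rw [Fintype.sum_prod_type, Fin.sum_univ_three]
    rfl
  ext ⟨a, i⟩
  fin_cases a
  · refine (key ![1, τ • R, 0] i).trans ?_
    simp [vec3, smul_mulVec]
  · refine (key ![(-κ₁) • L, 1, (-κ₂) • 1] i).trans ?_
    simp [vec3, smul_mulVec, neg_mulVec]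
  · refine (key ![(-p) • L, 0, (1 - p) • 1] i).trans ?_
    simp [vec3, smul_mulVec, neg_mulVec]

theorem stmt3 (n : ℕ) (hn : 1 ≤ n) (L R : Matrix (Fin n) (Fin n) ℝ)
    (hRdiag : ∀ i j, i ≠ j → R i j = 0) (hRpos : ∀ i, 0 < R i i)
    (τ κ₁ κ₂ p : ℝ) (hτ : τ ≠ 0) (hp : p ≠ 0)
    (hL1 : L *ᵥ (fun _ => (1 : ℝ)) = 0) :
    (Amat n L R τ κ₁ κ₂ p) *ᵥ (vec3 (fun _ => 1) 0 0) = vec3 (fun _ => 1) 0 0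
    ∧ (Amat n L R τ κ₁ κ₂ p) *ᵥ
          (vec3 (fun _ => 1) ((1 / τ) • (R⁻¹ *ᵥ fun _ => 1)) 0)
        = vec3 (fun _ => 1) ((1 / τ) • (R⁻¹ *ᵥ fun _ => 1)) 0
          + vec3 (fun _ => 1) 0 0
    ∧ (Amat n L R τ κ₁ κ₂ p) *ᵥ
          (vec3 (fun _ => -(τ * κ₂ / p ^ 2)) ((κ₂ / p) • (R⁻¹ *ᵥ fun _ => 1))
            (R⁻¹ *ᵥ fun _ => 1))
        = (1 - p) • vec3 (fun _ => -(τ * κ₂ / p ^ 2)) ((κ₂ / p) • (R⁻¹ *ᵥ fun _ => 1))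
            (R⁻¹ *ᵥ fun _ => 1) := by
  have hR : R *ᵥ (R⁻¹ *ᵥ fun _ => (1 : ℝ)) = fun _ => 1 := by
    have hd : R = Matrix.diagonal (fun i => R i i) := by
      ext i j
      by_cases h : i = j
      · subst h; simp
      · simp [h, hRdiag i j h]
    have hu : IsUnit R.det := by
      rw [hd, Matrix.det_diagonal, isUnit_iff_ne_zero]
      exact Finset.prod_ne_zero_iff.mpr fun i _ => (hRpos i).ne'
    rw [Matrix.mulVec_mulVec, Matrix.mul_nonsing_inv R hu, Matrix.one_mulVec]
  have hLc : L *ᵥ (fun _ => -(τ * κ₂ / p ^ 2)) = 0 := by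
    have : (fun _ : Fin n => -(τ * κ₂ / p ^ 2))
        = (-(τ * κ₂ / p ^ 2)) • (fun _ : Fin n => (1 : ℝ)) := by
      ext; simp
    rw [this, Matrix.mulVec_smul, hL1, smul_zero]
  simp only [Amat_mulVec_vec3, hL1, hLc, Matrix.mulVec_smul, hR, Matrix.mulVec_zero]
  generalize (R⁻¹ *ᵥ fun _ => (1 : ℝ)) = y
  refine ⟨?_, ?_, ?_⟩
  · ext ⟨a, i⟩
    fin_cases a <;> simp [vec3]
  · ext ⟨a, i⟩
    fin_cases a <;> simp [vec3, hτ]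
  · ext ⟨a, i⟩
    fin_cases a <;> simp [vec3] <;> field_simp <;> ring
end

section
/- Assume ξᵀL = 0, τ ≠ 0 and p ≠ 0. Define the row vectors η₁ᵀ = γ·(ξᵀR⁻¹, −τξᵀ, τκ₂(1/p + 1/p²)ξᵀ), η₂ᵀ = γ·(0, τξᵀ, −(τκ₂/p)ξᵀ), and η₃ᵀ = γ·(0, 0, ξᵀ) in ℝ^{3n}. Then η₂ᵀA = η₂ᵀ, η₁ᵀA = η₁ᵀ + η₂ᵀ (so (η₂, η₁) is a left Jordan chain of A for the eigenvalue 1), and η₃ᵀA = (1−p)·η₃ᵀ. -/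
open Matrix

theorem vec3_mul_Amat (n : ℕ) (L R : Matrix (Fin n) (Fin n) ℝ) (τ κ₁ κ₂ p : ℝ)
    (u v w : Fin n → ℝ) :
    vec3 u v w ᵥ* Amat n L R τ κ₁ κ₂ p
      = vec3 (u + (-κ₁) • (v ᵥ* L) + (-p) • (w ᵥ* L)) (τ • (u ᵥ* R) + v)
          ((-κ₂) • v + (1 - p) • w) := by
  have key : ∀ (b : Fin 3) (j : Fin n), (vec3 u v w ᵥ* Amat n L R τ κ₁ κ₂ p) (b, j)
      = (u ᵥ* (![![(1 : Matrix (Fin n) (Fin n) ℝ), τ • R, 0],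
      ![(-κ₁) • L, 1, (-κ₂) • (1 : Matrix (Fin n) (Fin n) ℝ)],
      ![(-p) • L, 0, (1 - p) • (1 : Matrix (Fin n) (Fin n) ℝ)]] 0 b)) j
      + (v ᵥ* (![![(1 : Matrix (Fin n) (Fin n) ℝ), τ • R, 0],
      ![(-κ₁) • L, 1, (-κ₂) • (1 : Matrix (Fin n) (Fin n) ℝ)],
      ![(-p) • L, 0, (1 - p) • (1 : Matrix (Fin n) (Fin n) ℝ)]] 1 b)) j
      + (w ᵥ* (![![(1 : Matrix (Fin n) (Fin n) ℝ), τ • R, 0],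
      ![(-κ₁) • L, 1, (-κ₂) • (1 : Matrix (Fin n) (Fin n) ℝ)],
      ![(-p) • L, 0, (1 - p) • (1 : Matrix (Fin n) (Fin n) ℝ)]] 2 b)) j := by
    intro b j
    simp only [Matrix.vecMul, dotProduct, Fintype.sum_prod_type, Fin.sum_univ_three]
    rfl
  funext ⟨b, j⟩
  rw [key]
  fin_cases b <;> simp [vec3, Matrix.vecMul_smul, Matrix.vecMul_neg]

theorem stmt4 (n : ℕ) (hn : 1 ≤ n) (L R : Matrix (Fin n) (Fin n) ℝ)
    (hRdiag : ∀ i j, i ≠ j → R i j = 0) (hRpos : ∀ i, 0 < R i i)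
    (τ κ₁ κ₂ p : ℝ) (hτ : τ ≠ 0) (hp : p ≠ 0)
    (ξ : Fin n → ℝ) (hξL : ξ ᵥ* L = 0) (hξ1 : ξ ⬝ᵥ (fun _ => 1) = 1)
    (γ : ℝ) (hγ : γ⁻¹ = ∑ i, ξ i / R i i) :
    (γ • vec3 0 (τ • ξ) ((-(τ * κ₂ / p)) • ξ)) ᵥ* (Amat n L R τ κ₁ κ₂ p)
        = γ • vec3 0 (τ • ξ) ((-(τ * κ₂ / p)) • ξ)
    ∧ (γ • vec3 (ξ ᵥ* R⁻¹) ((-τ) • ξ) ((τ * κ₂ * (1 / p + 1 / p ^ 2)) • ξ)) ᵥ*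
          (Amat n L R τ κ₁ κ₂ p)
        = γ • vec3 (ξ ᵥ* R⁻¹) ((-τ) • ξ) ((τ * κ₂ * (1 / p + 1 / p ^ 2)) • ξ)
          + γ • vec3 0 (τ • ξ) ((-(τ * κ₂ / p)) • ξ)
    ∧ (γ • vec3 0 0 ξ) ᵥ* (Amat n L R τ κ₁ κ₂ p) = (1 - p) • (γ • vec3 0 0 ξ) := by
  have hR : R = Matrix.diagonal (fun i => R i i) := by
    ext i j
    by_cases h : i = j
    · subst h; simp
    · rw [hRdiag i j h, Matrix.diagonal_apply_ne _ h]
  have hdet : IsUnit R.det := by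
    rw [hR, Matrix.det_diagonal, isUnit_iff_ne_zero]
    exact Finset.prod_ne_zero_iff.mpr fun i _ => (hRpos i).ne'
  have hinv : R⁻¹ * R = 1 := Matrix.nonsing_inv_mul R hdet
  simp only [Matrix.smul_vecMul, vec3_mul_Amat, hξL, Matrix.vecMul_vecMul, hinv,
    Matrix.vecMul_one, Matrix.zero_vecMul]
  refine ⟨?_, ?_, ?_⟩ <;> funext ⟨b, j⟩ <;> fin_cases b <;> simp [vec3] <;> field_simp <;> ring
end

section
/- Assume τ ≠ 0 and p ≠ 0, and assume ξᵀ1_n = 1 and γ·(ξᵀR⁻¹1_n) = 1. With ζ₁ = (1_n, 0_n, 0_n), ζ₂ = (1_n, (1/τ)R⁻¹1_n, 0_n), ζ₃ = (−(τκ₂/p²)1_n, (κ₂/p)R⁻¹1_n, R⁻¹1_n), η₁ᵀ = γ(ξᵀR⁻¹, −τξᵀ, τκ₂(1/p + 1/p²)ξᵀ), η₂ᵀ = γ(0, τξᵀ, −(τκ₂/p)ξᵀ), η₃ᵀ = γ(0, 0, ξᵀ), the biorthogonality relations η_iᵀζ_j = 1 if i = j and η_iᵀζ_j = 0 if i ≠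 j hold for all i, j ∈ {1, 2, 3}. -/
open Matrix

theorem stmt5 (n : ℕ) (hn : 1 ≤ n) (R : Matrix (Fin n) (Fin n) ℝ)
    (hRdiag : ∀ i j, i ≠ j → R i j = 0) (hRpos : ∀ i, 0 < R i i)
    (ξ : Fin n → ℝ) (τ κ₂ p γ : ℝ) (hτ : τ ≠ 0) (hp : p ≠ 0)
    (hξ1 : ξ ⬝ᵥ (fun _ => 1) = 1)
    (hγ : γ * ((ξ ᵥ* R⁻¹) ⬝ᵥ (fun _ => 1)) = 1) :
    ∀ i j : Fin 3,
      (![γ • vec3 (ξ ᵥ* R⁻¹) ((-τ) • ξ) ((τ * κ₂ * (1 / p + 1 / p ^ 2)) • ξ),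
          γ • vec3 0 (τ • ξ) ((-(τ * κ₂ / p)) • ξ),
          γ • vec3 0 0 ξ] i)
        ⬝ᵥ
      (![vec3 (fun _ => 1) 0 0,
          vec3 (fun _ => 1) ((1 / τ) • (R⁻¹ *ᵥ fun _ => 1)) 0,
          vec3 (fun _ => -(τ * κ₂ / p ^ 2)) ((κ₂ / p) • (R⁻¹ *ᵥ fun _ => 1))
            (R⁻¹ *ᵥ fun _ => 1)] j)
        = if i = j then 1 else 0 := by
  have hdot : ∀ u v w u' v' w' : Fin n → ℝ,
      vec3 u v w ⬝ᵥ vec3 u' v' w' = u ⬝ᵥ u' + v ⬝ᵥ v' + w ⬝ᵥ w' := by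
    intro u v w u' v' w'
    simp [dotProduct, vec3, Fintype.sum_prod_type, Fin.sum_univ_three]
  have hs : ξ ⬝ᵥ (R⁻¹ *ᵥ fun _ => 1) = (ξ ᵥ* R⁻¹) ⬝ᵥ (fun _ => 1) :=
    dotProduct_mulVec _ _ _
  have hc : (fun _ : Fin n => -(τ * κ₂ / p ^ 2))
      = (-(τ * κ₂ / p ^ 2)) • (fun _ : Fin n => (1 : ℝ)) := by
    ext; simp
  rw [hc]
  generalize hS : (ξ ᵥ* R⁻¹) ⬝ᵥ (fun _ => (1 : ℝ)) = S at *
  intro i j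
  fin_cases i <;> fin_cases j <;>
    simp only [Fin.zero_eta, Fin.mk_one, Fin.reduceFinMk, Matrix.cons_val, smul_dotProduct,
      hdot, dotProduct_smul, zero_dotProduct, dotProduct_zero, hs, hS, smul_eq_mul] <;>
    simp <;> field_simp <;> first | linear_combination hγ | (right; ring)
end

section
/- Assume ξᵀL = 0, τ ≠ 0 and p ≠ 0. Suppose ζ = (x, s, y) ∈ ℂ^{3n} is an eigenvector of A with eigenvalue μ ∈ ℂ satisfying μ ≠ 1 and μ ≠ 1−p. Then ξᵀy = 0, ξᵀs = 0, and ξᵀR⁻¹x = 0; i.e. every eigenvector of A for an eigenvalue outside {1, 1−p} is annihilated by the three left (generalized) eigenvectors associated to the eigenvalues 1 and 1−p. -/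
open Matrix

theorem stmt6 (n : ℕ) (hn : 1 ≤ n) (L R : Matrix (Fin n) (Fin n) ℝ)
    (hRdiag : ∀ i j, i ≠ j → R i j = 0) (hRpos : ∀ i, 0 < R i i)
    (τ κ₁ κ₂ p : ℝ) (hτ : τ ≠ 0) (hp : p ≠ 0)
    (ξ : Fin n → ℝ) (hξL : ξ ᵥ* L = 0)
    (μ : ℂ) (hμ1 : μ ≠ 1) (hμ2 : μ ≠ 1 - (p : ℂ))
    (ζ : Fin 3 × Fin n → ℂ) (hζ : ζ ≠ 0)
    (heig : (Amat n L R τ κ₁ κ₂ p).map ((↑) : ℝ → ℂ) *ᵥ ζ = μ • ζ) :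
    ((fun i => (ξ i : ℂ)) ⬝ᵥ (fun i => ζ (2, i)) = 0)
    ∧ ((fun i => (ξ i : ℂ)) ⬝ᵥ (fun i => ζ (1, i)) = 0)
    ∧ ((fun i => ((ξ ᵥ* R⁻¹) i : ℂ)) ⬝ᵥ (fun i => ζ (0, i)) = 0) := by
  obtain ⟨d, rfl⟩ : ∃ d, R = Matrix.diagonal d := by
    refine ⟨fun i => R i i, ?_⟩
    ext i j
    by_cases h : i = j
    · subst h; simp
    · simp [h, hRdiag i j h]
  have hd : ∀ i, d i ≠ 0 := fun i => by
    have := hRpos i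
    simp at this
    exact this.ne'
  have hinv : (Matrix.diagonal d)⁻¹ = Matrix.diagonal (fun i => (d i)⁻¹) := by
    apply Matrix.inv_eq_right_inv
    rw [Matrix.diagonal_mul_diagonal, ← Matrix.diagonal_one]
    congr 1
    funext i
    exact mul_inv_cancel₀ (hd i)
  have hA00 : ∀ i j, Amat n L (Matrix.diagonal d) τ κ₁ κ₂ p (0, i) (0, j)
      = (1 : Matrix (Fin n) (Fin n) ℝ) i j := fun _ _ => rfl
  have hA01 : ∀ i j, Amat n L (Matrix.diagonal d) τ κ₁ κ₂ p (0, i) (1, j)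
      = τ * Matrix.diagonal d i j := fun _ _ => rfl
  have hA02 : ∀ i j, Amat n L (Matrix.diagonal d) τ κ₁ κ₂ p (0, i) (2, j)
      = 0 := fun _ _ => rfl
  have hA10 : ∀ i j, Amat n L (Matrix.diagonal d) τ κ₁ κ₂ p (1, i) (0, j)
      = -κ₁ * L i j := fun _ _ => rfl
  have hA11 : ∀ i j, Amat n L (Matrix.diagonal d) τ κ₁ κ₂ p (1, i) (1, j)
      = (1 : Matrix (Fin n) (Fin n) ℝ) i j := fun _ _ => rfl
  have hA12 : ∀ i j, Amat n L (Matrix.diagonal d) τ κ₁ κ₂ p (1, i) (2, j)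
      = -κ₂ * (1 : Matrix (Fin n) (Fin n) ℝ) i j := fun _ _ => rfl
  have hA20 : ∀ i j, Amat n L (Matrix.diagonal d) τ κ₁ κ₂ p (2, i) (0, j)
      = -p * L i j := fun _ _ => rfl
  have hA21 : ∀ i j, Amat n L (Matrix.diagonal d) τ κ₁ κ₂ p (2, i) (1, j)
      = 0 := fun _ _ => rfl
  have hA22 : ∀ i j, Amat n L (Matrix.diagonal d) τ κ₁ κ₂ p (2, i) (2, j)
      = (1 - p) * (1 : Matrix (Fin n) (Fin n) ℝ) i j := fun _ _ => rfl
  have e0 : ∀ i, ζ (0, i) + τ * d i * ζ (1, i) = μ * ζ (0, i) := fun i => by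
    have h := congrFun heig (0, i)
    simpa [Matrix.mulVec, dotProduct, hA00, hA01, hA02, Fintype.sum_prod_type, Fin.sum_univ_three,
      Matrix.one_apply, Matrix.diagonal_apply, apply_ite (Complex.ofReal), ite_mul, mul_ite] using h
  have e1 : ∀ i, -(κ₁ * ∑ j, (L i j : ℂ) * ζ (0, j)) + ζ (1, i) - κ₂ * ζ (2, i)
      = μ * ζ (1, i) := fun i => by
    have h := congrFun heig (1, i)
    simpa [Matrix.mulVec, dotProduct, hA10, hA11, hA12, Fintype.sum_prod_type, Fin.sum_univ_three,
      Matrix.one_apply, apply_ite (Complex.ofReal), ite_mul, mul_ite, Finset.mul_sum,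
      mul_assoc, sub_eq_add_neg] using h
  have e2 : ∀ i, -(p * ∑ j, (L i j : ℂ) * ζ (0, j)) + (1 - p) * ζ (2, i)
      = μ * ζ (2, i) := fun i => by
    have h := congrFun heig (2, i)
    simpa [Matrix.mulVec, dotProduct, hA20, hA21, hA22, Fintype.sum_prod_type, Fin.sum_univ_three,
      Matrix.one_apply, apply_ite (Complex.ofReal), ite_mul, mul_ite, Finset.mul_sum,
      mul_assoc] using h
  have hL : ∑ i, (ξ i : ℂ) * ∑ j, (L i j : ℂ) * ζ (0, j) = 0 := by
    simp_rw [Finset.mul_sum]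
    rw [Finset.sum_comm]
    refine Finset.sum_eq_zero fun j _ => ?_
    have h := congrFun hξL j
    simp only [Matrix.vecMul, dotProduct, Pi.zero_apply] at h
    have h' : ∑ i, (ξ i : ℂ) * (L i j : ℂ) = 0 := by exact_mod_cast h
    simp_rw [← mul_assoc]
    rw [← Finset.sum_mul, h', zero_mul]
  have hy : ∑ i, (ξ i : ℂ) * ζ (2, i) = 0 := by
    have key : (μ - (1 - p)) * ∑ i, (ξ i : ℂ) * ζ (2, i)
        = -p * ∑ i, (ξ i : ℂ) * ∑ j, (L i j : ℂ) * ζ (0, j) := by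
      rw [Finset.mul_sum, Finset.mul_sum]
      exact Finset.sum_congr rfl fun i _ => by linear_combination -(ξ i : ℂ) * e2 i
    rw [hL, mul_zero] at key
    exact (mul_eq_zero.mp key).resolve_left (sub_ne_zero.mpr hμ2)
  have hs : ∑ i, (ξ i : ℂ) * ζ (1, i) = 0 := by
    have key : (μ - 1) * ∑ i, (ξ i : ℂ) * ζ (1, i)
        = -κ₁ * ∑ i, (ξ i : ℂ) * ∑ j, (L i j : ℂ) * ζ (0, j)
          + -κ₂ * ∑ i, (ξ i : ℂ) * ζ (2, i) := by
      rw [Finset.mul_sum, Finset.mul_sum, Finset.mul_sum, ← Finset.sum_add_distrib]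
      exact Finset.sum_congr rfl fun i _ => by linear_combination -(ξ i : ℂ) * e1 i
    rw [hL, hy, mul_zero, mul_zero, add_zero] at key
    exact (mul_eq_zero.mp key).resolve_left (sub_ne_zero.mpr hμ1)
  refine ⟨hy, hs, ?_⟩
  rw [hinv]
  simp only [dotProduct, Matrix.vecMul_diagonal]
  have key : (μ - 1) * ∑ i, ((ξ i * (d i)⁻¹ : ℝ) : ℂ) * ζ (0, i)
      = τ * ∑ i, (ξ i : ℂ) * ζ (1, i) := by
    rw [Finset.mul_sum, Finset.mul_sum]
    refine Finset.sum_congr rfl fun i _ => ?_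
    have hdi : (d i : ℂ) ≠ 0 := by exact_mod_cast hd i
    have hc : (d i : ℂ) * (d i : ℂ)⁻¹ = 1 := mul_inv_cancel₀ hdi
    push_cast
    linear_combination -(ξ i : ℂ) * (d i : ℂ)⁻¹ * e0 i + τ * ξ i * ζ (1, i) * hc
  rw [hs, mul_zero] at key
  exact (mul_eq_zero.mp key).resolve_left (sub_ne_zero.mpr hμ1)
end

section
/- Suppose ξᵀL = 0 and let z_k = (x_k, s_k, y_k) ∈ ℝ^{3n} evolve as z_{k+1} = A·z_k. Define the weighted averages x̃_k := γ·Σ_i (ξ_i/r_i)·(x_k)_i, s̃_k := γ·Σ_i ξ_i·(s_k)_i, and ỹ_k := γ·Σ_i ξ_i·(y_k)_i. Then these scalars evolve autonomously according to x̃_{k+1} = x̃_k + τ·s̃_k, s̃_{k+1} = s̃_k − κ₂·ỹ_k, and ỹ_{k+1} = (1−p)·ỹ_k for all k. -/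
open Matrix

theorem stmt7 (n : ℕ) (hn : 1 ≤ n) (L R : Matrix (Fin n) (Fin n) ℝ)
    (hRdiag : ∀ i j, i ≠ j → R i j = 0) (hRpos : ∀ i, 0 < R i i)
    (τ κ₁ κ₂ p : ℝ)
    (ξ : Fin n → ℝ) (hξL : ξ ᵥ* L = 0) (hξ1 : ξ ⬝ᵥ (fun _ => 1) = 1)
    (γ : ℝ) (hγ : γ⁻¹ = ∑ i, ξ i / R i i)
    (z : ℕ → (Fin 3 × Fin n → ℝ))
    (hz : ∀ k, z (k + 1) = (Amat n L R τ κ₁ κ₂ p) *ᵥ z k) :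
    ∀ k : ℕ,
      (γ * ∑ i, (ξ i / R i i) * z (k + 1) (0, i)
          = γ * ∑ i, (ξ i / R i i) * z k (0, i) + τ * (γ * ∑ i, ξ i * z k (1, i)))
      ∧ (γ * ∑ i, ξ i * z (k + 1) (1, i)
          = γ * ∑ i, ξ i * z k (1, i) - κ₂ * (γ * ∑ i, ξ i * z k (2, i)))
      ∧ (γ * ∑ i, ξ i * z (k + 1) (2, i)
          = (1 - p) * (γ * ∑ i, ξ i * z k (2, i))) := by
  intro k
  have hrow : ∀ a i, z (k + 1) (a, i)
      = ∑ j, Amat n L R τ κ₁ κ₂ p (a, i) (0, j) * z k (0, j)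
        + ∑ j, Amat n L R τ κ₁ κ₂ p (a, i) (1, j) * z k (1, j)
        + ∑ j, Amat n L R τ κ₁ κ₂ p (a, i) (2, j) * z k (2, j) := by
    intro a i
    rw [hz, mulVec, dotProduct, Fintype.sum_prod_type, Fin.sum_univ_three]
  have a00 : ∀ i j, Amat n L R τ κ₁ κ₂ p (0, i) (0, j) = (1 : Matrix (Fin n) (Fin n) ℝ) i j :=
    fun _ _ => rfl
  have a01 : ∀ i j, Amat n L R τ κ₁ κ₂ p (0, i) (1, j) = τ * R i j := fun _ _ => rfl
  have a02 : ∀ i j, Amat n L R τ κ₁ κ₂ p (0, i) (2, j) = 0 := fun _ _ => rfl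
  have a10 : ∀ i j, Amat n L R τ κ₁ κ₂ p (1, i) (0, j) = -κ₁ * L i j := fun _ _ => rfl
  have a11 : ∀ i j, Amat n L R τ κ₁ κ₂ p (1, i) (1, j) = (1 : Matrix (Fin n) (Fin n) ℝ) i j :=
    fun _ _ => rfl
  have a12 : ∀ i j, Amat n L R τ κ₁ κ₂ p (1, i) (2, j)
      = -κ₂ * (1 : Matrix (Fin n) (Fin n) ℝ) i j := fun _ _ => rfl
  have a20 : ∀ i j, Amat n L R τ κ₁ κ₂ p (2, i) (0, j) = -p * L i j := fun _ _ => rfl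
  have a21 : ∀ i j, Amat n L R τ κ₁ κ₂ p (2, i) (1, j) = 0 := fun _ _ => rfl
  have a22 : ∀ i j, Amat n L R τ κ₁ κ₂ p (2, i) (2, j)
      = (1 - p) * (1 : Matrix (Fin n) (Fin n) ℝ) i j := fun _ _ => rfl
  have hL : ∑ i, ξ i * ∑ j, L i j * z k (0, j) = 0 := by
    have h : ξ ⬝ᵥ (L *ᵥ fun j => z k (0, j)) = 0 := by
      rw [Matrix.dotProduct_mulVec, hξL, zero_dotProduct]
    simpa [dotProduct, mulVec] using h
  have h0 : ∀ i, z (k + 1) (0, i) = z k (0, i) + τ * (R i i * z k (1, i)) := by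
    intro i
    have hR : ∑ j, τ * R i j * z k (1, j) = τ * (R i i * z k (1, i)) := by
      rw [Finset.sum_eq_single i]
      · ring
      · intro j _ hj
        rw [hRdiag i j hj.symm]
        ring
      · simp
    rw [hrow]
    simp [a00, a01, a02, Matrix.one_apply, hR]
  have h1 : ∀ i, z (k + 1) (1, i)
      = z k (1, i) - κ₂ * z k (2, i) - κ₁ * ∑ j, L i j * z k (0, j) := by
    intro i
    rw [hrow]
    simp [a10, a11, a12, Matrix.one_apply,
      Finset.mul_sum, mul_assoc]
    ring
  have h2 : ∀ i, z (k + 1) (2, i)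
      = (1 - p) * z k (2, i) - p * ∑ j, L i j * z k (0, j) := by
    intro i
    rw [hrow]
    simp [a20, a21, a22, Matrix.one_apply,
      Finset.mul_sum, mul_assoc]
    ring
  refine ⟨?_, ?_, ?_⟩
  · have e : ∑ i, (ξ i / R i i) * z (k + 1) (0, i)
        = ∑ i, (ξ i / R i i) * z k (0, i) + τ * ∑ i, ξ i * z k (1, i) := by
      rw [Finset.mul_sum, ← Finset.sum_add_distrib]
      refine Finset.sum_congr rfl fun i _ => ?_
      have := (hRpos i).ne'
      rw [h0]
      field_simp
    rw [e]; ring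
  · have e : ∑ i, ξ i * z (k + 1) (1, i) = ∑ i, ξ i * z k (1, i)
        - κ₂ * ∑ i, ξ i * z k (2, i) - κ₁ * ∑ i, ξ i * ∑ j, L i j * z k (0, j) := by
      rw [Finset.mul_sum, Finset.mul_sum, ← Finset.sum_sub_distrib, ← Finset.sum_sub_distrib]
      refine Finset.sum_congr rfl fun i _ => ?_
      rw [h1]; ring
    rw [e, hL]; ring
  · have e : ∑ i, ξ i * z (k + 1) (2, i) = (1 - p) * ∑ i, ξ i * z k (2, i)
        - p * ∑ i, ξ i * ∑ j, L i j * z k (0, j) := by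
      rw [Finset.mul_sum, Finset.mul_sum, ← Finset.sum_sub_distrib]
      refine Finset.sum_congr rfl fun i _ => ?_
      rw [h2]; ring
    rw [e, hL]; ring
end

section
/- Assume L·1_n = 0 and γ·(ξᵀR⁻¹1_n) = 1. Define the 3n×3n projection N = blockdiag(N₁, N₂, N₂) with N₁ = I_n − γ·1_n ξᵀR⁻¹ and N₂ = I_n − γ·R⁻¹1_n ξᵀ. Then N·A·N = N·A; consequently, if z_{k+1} = A·z_k and δz_k := N·z_k, the deviations evolve autonomously according to δz_{k+1} = (N·A)·δz_k. -/
open Matrix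

/-- The 3n×3n block-diagonal projection N = blockdiag(N₁, N₂, N₂) with
N₁ = I − γ·1_n ξᵀR⁻¹ and N₂ = I − γ·R⁻¹1_n ξᵀ. -/
noncomputable def Nmat (n : ℕ) (R : Matrix (Fin n) (Fin n) ℝ) (ξ : Fin n → ℝ) (γ : ℝ) :
    Matrix (Fin 3 × Fin n) (Fin 3 × Fin n) ℝ :=
  Matrix.of fun a b =>
    ![![(1 : Matrix (Fin n) (Fin n) ℝ)
          - γ • vecMulVec (fun _ => 1) (ξ ᵥ* R⁻¹), 0, 0],
      ![0, (1 : Matrix (Fin n) (Fin n) ℝ)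
          - γ • vecMulVec (R⁻¹ *ᵥ fun _ => 1) ξ, 0],
      ![0, 0, (1 : Matrix (Fin n) (Fin n) ℝ)
          - γ • vecMulVec (R⁻¹ *ᵥ fun _ => 1) ξ]] a.1 b.1 a.2 b.2

def blk {n : ℕ} (M : Fin 3 → Fin 3 → Matrix (Fin n) (Fin n) ℝ) :
    Matrix (Fin 3 × Fin n) (Fin 3 × Fin n) ℝ :=
  Matrix.of fun a b => M a.1 b.1 a.2 b.2

theorem blk_mul {n : ℕ} (M P : Fin 3 → Fin 3 → Matrix (Fin n) (Fin n) ℝ) :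
    blk M * blk P = blk fun a b => ∑ k, M a k * P k b := by
  ext a b
  simp [blk, Matrix.mul_apply, Fintype.sum_prod_type, Matrix.sum_apply]

theorem stmt8 (n : ℕ) (hn : 1 ≤ n) (L R : Matrix (Fin n) (Fin n) ℝ)
    (hRdiag : ∀ i j, i ≠ j → R i j = 0) (hRpos : ∀ i, 0 < R i i)
    (τ κ₁ κ₂ p : ℝ) (ξ : Fin n → ℝ) (γ : ℝ)
    (hL1 : L *ᵥ (fun _ => (1 : ℝ)) = 0)
    (hγ : γ * ((ξ ᵥ* R⁻¹) ⬝ᵥ (fun _ => 1)) = 1) :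
    (Nmat n R ξ γ) * (Amat n L R τ κ₁ κ₂ p) * (Nmat n R ξ γ)
        = (Nmat n R ξ γ) * (Amat n L R τ κ₁ κ₂ p)
    ∧ ∀ z : ℕ → (Fin 3 × Fin n → ℝ),
        (∀ k, z (k + 1) = (Amat n L R τ κ₁ κ₂ p) *ᵥ z k) →
        ∀ k, (Nmat n R ξ γ) *ᵥ z (k + 1)
          = ((Nmat n R ξ γ) * (Amat n L R τ κ₁ κ₂ p)) *ᵥ ((Nmat n R ξ γ) *ᵥ z k) := by
  have hdet : IsUnit R.det := by
    have hR : R = Matrix.diagonal (fun i => R i i) := by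
      ext i j
      by_cases h : i = j
      · subst h; simp
      · simp [h, hRdiag i j h]
    rw [hR, Matrix.det_diagonal]
    exact (Finset.prod_pos fun i _ => hRpos i).ne'.isUnit
  have key : (Nmat n R ξ γ) * (Amat n L R τ κ₁ κ₂ p) * (Nmat n R ξ γ)
        = (Nmat n R ξ γ) * (Amat n L R τ κ₁ κ₂ p) := by
    have hγ' : γ * (ξ ⬝ᵥ (R⁻¹ *ᵥ fun _ => 1)) = 1 := by
      rw [Matrix.dotProduct_mulVec]; exact hγ
    have e1 : (γ • vecMulVec (fun _ => 1) (ξ ᵥ* R⁻¹) : Matrix (Fin n) (Fin n) ℝ)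
        * (γ • vecMulVec (fun _ => 1) (ξ ᵥ* R⁻¹)) = γ • vecMulVec (fun _ => 1) (ξ ᵥ* R⁻¹) := by
      rw [Matrix.smul_mul, Matrix.mul_smul, Matrix.vecMulVec_mul_vecMulVec,
        Matrix.vecMulVec_smul, smul_smul, smul_smul, mul_assoc, hγ, mul_one]
    have e2 : (γ • vecMulVec (R⁻¹ *ᵥ fun _ => 1) ξ : Matrix (Fin n) (Fin n) ℝ)
        * (γ • vecMulVec (R⁻¹ *ᵥ fun _ => 1) ξ) = γ • vecMulVec (R⁻¹ *ᵥ fun _ => 1) ξ := by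
      rw [Matrix.smul_mul, Matrix.mul_smul, Matrix.vecMulVec_mul_vecMulVec,
        Matrix.vecMulVec_smul, smul_smul, smul_smul, mul_assoc, hγ', mul_one]
    have e3 : R * (γ • vecMulVec (R⁻¹ *ᵥ fun _ => 1) ξ)
        = (γ • vecMulVec (fun _ => 1) (ξ ᵥ* R⁻¹)) * R := by
      rw [Matrix.mul_smul, Matrix.smul_mul, Matrix.mul_vecMulVec, Matrix.vecMulVec_mul,
        Matrix.mulVec_mulVec, Matrix.vecMul_vecMul, Matrix.mul_nonsing_inv _ hdet,
        Matrix.nonsing_inv_mul _ hdet, Matrix.one_mulVec, Matrix.vecMul_one]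
    have e4 : L * (γ • vecMulVec (fun _ => 1) (ξ ᵥ* R⁻¹)) = 0 := by
      rw [Matrix.mul_smul, Matrix.mul_vecMulVec, hL1, Matrix.zero_vecMulVec, smul_zero]
    unfold Nmat Amat
    generalize (γ • vecMulVec (fun _ => 1) (ξ ᵥ* R⁻¹) : Matrix (Fin n) (Fin n) ℝ) = E at *
    generalize (γ • vecMulVec (R⁻¹ *ᵥ fun _ => 1) ξ : Matrix (Fin n) (Fin n) ℝ) = F at *
    have f1 : (1 - E) * (1 - E) = 1 - E := by
      simp only [mul_sub, sub_mul, e1]; simp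
    have f2 : (1 - F) * (1 - F) = 1 - F := by
      simp only [mul_sub, sub_mul, e2]; simp
    have f3 : (1 - E) * R * (1 - F) = (1 - E) * R := by
      have : (1 - E) * R * (1 - F) = (1 - E) * R - (1 - E) * (R * F) := by
        noncomm_ring
      rw [this, e3, ← mul_assoc, sub_mul 1 E E, e1]; simp
    have f4 : (1 - F) * L * (1 - E) = (1 - F) * L := by
      rw [mul_assoc, mul_sub L, e4]; simp
    generalize 1 - E = U at *
    generalize 1 - F = V at *
    change blk ![![U, 0, 0], ![0, V, 0], ![0, 0, V]]
      * blk ![![1, τ • R, 0], ![(-κ₁) • L, 1, (-κ₂) • 1], ![(-p) • L, 0, (1 - p) • 1]]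
      * blk ![![U, 0, 0], ![0, V, 0], ![0, 0, V]]
      = blk ![![U, 0, 0], ![0, V, 0], ![0, 0, V]]
      * blk ![![1, τ • R, 0], ![(-κ₁) • L, 1, (-κ₂) • 1], ![(-p) • L, 0, (1 - p) • 1]]
    rw [blk_mul, blk_mul]
    congr 1
    funext a b
    fin_cases a <;> fin_cases b <;>
      simp [Fin.sum_univ_three, f1, f2, f3, f4]
  refine ⟨key, fun z hz k => ?_⟩
  rw [hz, Matrix.mulVec_mulVec, Matrix.mulVec_mulVec, key]
end

section
/- Assume L·1_n = 0, ξᵀL = 0, ξᵀ1_n = 1, 0 < p < 2, τ ≠ 0, and that every eigenvalue of the matrix N·A (over ℂ) other than 0 has modulus strictly less than 1 (equivalently, the spectral radius of N·A is < 1). Let z_k = (x_k, s_k, y_k) = A^k·z₀. Then the network synchronizes: for every index i, (x_k)_i − (x* + k·τ·r*) → 0, (s_k)_i → r*/r_i, and (y_k)_i → 0 as k → ∞, where r* = γ·Σ_i ξ_i·((s₀)_i − (κ₂/p)·(y₀)_i) and x* = γ·Σ_i ξ_i·((x₀)_i/r_i + τ·(κ₂/p²)·(y₀)_i). -/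
open Matrix

open Filter Topology in
/-- In a complex Banach algebra, spectrum in the open unit disc forces powers to vanish. -/
theorem aux_pow_banach {B : Type*} [NormedRing B] [NormedAlgebra ℂ B] [CompleteSpace B]
    [Nontrivial B] (a : B) (h : ∀ μ ∈ spectrum ℂ a, ‖μ‖ < 1) :
    Tendsto (fun k : ℕ => a ^ k) atTop (𝓝 0) := by
  have h1 : spectralRadius ℂ a < ((1 : NNReal) : ENNReal) := by
    apply spectrum.spectralRadius_lt_of_forall_lt
    intro z hz
    exact_mod_cast h z hz
  obtain ⟨r, hr1, hr2⟩ := ENNReal.lt_iff_exists_nnreal_btwn.mp h1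
  have hr2' : r < 1 := by exact_mod_cast hr2
  have h2 := (spectrum.pow_nnnorm_pow_one_div_tendsto_nhds_spectralRadius a).eventually_lt_const hr1
  have h3 : ∀ᶠ k : ℕ in atTop, ‖a ^ k‖ ≤ (r : ℝ) ^ k := by
    filter_upwards [h2, eventually_gt_atTop 0] with k hk hk0
    have hk0' : (0 : ℝ) < k := by exact_mod_cast hk0
    rw [one_div] at hk
    have h4 : (‖a ^ k‖₊ : ENNReal) < (r : ENNReal) ^ (k : ℝ) :=
      (ENNReal.rpow_inv_lt_iff hk0').mp hk
    rw [ENNReal.rpow_natCast] at h4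
    have h5 : ‖a ^ k‖₊ < r ^ k := by exact_mod_cast h4
    exact_mod_cast h5.le
  refine squeeze_zero_norm' h3 ?_
  exact tendsto_pow_atTop_nhds_zero_of_lt_one r.2 (by exact_mod_cast hr2')

open Filter Topology in
attribute [local instance] Matrix.linftyOpNormedRing Matrix.linftyOpNormedAlgebra in
/-- Powers of a real matrix with complex spectrum in the open unit disc tend to zero. -/
theorem aux_pow_matrix {ι : Type*} [Fintype ι] [DecidableEq ι] [Nonempty ι]
    (M : Matrix ι ι ℝ)
    (h : ∀ μ ∈ spectrum ℂ (M.map ((↑) : ℝ → ℂ)), ‖μ‖ < 1) (v : ι → ℝ) (i : ι) :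
    Tendsto (fun k : ℕ => ((M ^ k) *ᵥ v) i) atTop (𝓝 0) := by
  have h1 := aux_pow_banach (M.map ((↑) : ℝ → ℂ)) h
  have hentry : ∀ j, Tendsto (fun k : ℕ => (M ^ k) i j) atTop (𝓝 0) := by
    intro j
    have hc : Continuous (fun Q : Matrix ι ι ℂ => (Q i j).re) := by fun_prop
    have h2 := (hc.tendsto 0).comp h1
    have h3 : ∀ k : ℕ, (M.map ((↑) : ℝ → ℂ)) ^ k = (M ^ k).map ((↑) : ℝ → ℂ) := by
      intro k
      exact (Matrix.map_pow M Complex.ofRealHom k).symm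
    simpa [Function.comp_def, h3] using h2
  have h4 : Tendsto (fun k : ℕ => ∑ j, (M ^ k) i j * v j) atTop (𝓝 (∑ j : ι, 0 * v j)) :=
    tendsto_finsetSum _ fun j _ => (hentry j).mul_const _
  simpa [Matrix.mulVec, dotProduct] using h4

section
variable {n : ℕ} (L R : Matrix (Fin n) (Fin n) ℝ) (τ κ₁ κ₂ p : ℝ) (ξ : Fin n → ℝ) (γ : ℝ)
  (v : Fin 3 × Fin n → ℝ) (i : Fin n)

theorem aux_R (hRdiag : ∀ i j, i ≠ j → R i j = 0) : R = Matrix.diagonal fun i => R i i := by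
  ext a b
  by_cases h : a = b
  · subst h; simp
  · simp [h, hRdiag a b h]

theorem aux_Rinv (hRdiag : ∀ i j, i ≠ j → R i j = 0) (hRpos : ∀ i, 0 < R i i) :
    R⁻¹ = Matrix.diagonal fun i => (R i i)⁻¹ := by
  apply Matrix.inv_eq_right_inv
  conv_lhs => rw [aux_R R hRdiag]
  rw [Matrix.diagonal_mul_diagonal, ← Matrix.diagonal_one]
  congr 1
  ext a
  simpa using mul_inv_cancel₀ (hRpos a).ne'

theorem aux_split (M : Matrix (Fin 3 × Fin n) (Fin 3 × Fin n) ℝ) (B C D : Matrix (Fin n) (Fin n) ℝ)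
    (a : Fin 3) (hB : ∀ j, M (a, i) (0, j) = B i j) (hC : ∀ j, M (a, i) (1, j) = C i j)
    (hD : ∀ j, M (a, i) (2, j) = D i j) :
    (M *ᵥ v) (a, i) = (B *ᵥ fun j => v (0, j)) i + (C *ᵥ fun j => v (1, j)) i
      + (D *ᵥ fun j => v (2, j)) i := by
  simp only [Matrix.mulVec, dotProduct, Fintype.sum_prod_type, Fin.sum_univ_three, hB, hC, hD]

theorem aux_A0 (hRdiag : ∀ i j, i ≠ j → R i j = 0) :
    ((Amat n L R τ κ₁ κ₂ p) *ᵥ v) (0, i) = v (0, i) + τ * R i i * v (1, i) := by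
  rw [aux_split v i _ 1 (τ • R) 0 0 (fun _ => rfl) (fun _ => rfl) (fun _ => rfl)]
  rw [aux_R R hRdiag]
  simp [Matrix.smul_mulVec, Matrix.mulVec_diagonal, mul_assoc]

theorem aux_A1 :
    ((Amat n L R τ κ₁ κ₂ p) *ᵥ v) (1, i)
      = -κ₁ * (∑ j, L i j * v (0, j)) + v (1, i) - κ₂ * v (2, i) := by
  rw [aux_split v i _ ((-κ₁) • L) 1 ((-κ₂) • 1) 1 (fun _ => rfl) (fun _ => rfl) (fun _ => rfl)]
  simp only [Matrix.smul_mulVec, Matrix.one_mulVec, Pi.smul_apply, smul_eq_mul]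
  simp only [Matrix.mulVec, dotProduct]
  ring

theorem aux_A2 :
    ((Amat n L R τ κ₁ κ₂ p) *ᵥ v) (2, i)
      = -p * (∑ j, L i j * v (0, j)) + (1 - p) * v (2, i) := by
  rw [aux_split v i _ ((-p) • L) 0 ((1 - p) • 1) 2 (fun _ => rfl) (fun _ => rfl) (fun _ => rfl)]
  simp only [Matrix.smul_mulVec, Matrix.one_mulVec, Pi.smul_apply, smul_eq_mul,
    Matrix.zero_mulVec, Pi.zero_apply]
  simp only [Matrix.mulVec, dotProduct]
  ring

theorem aux_N0 (hRdiag : ∀ i j, i ≠ j → R i j = 0) (hRpos : ∀ i, 0 < R i i) :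
    ((Nmat n R ξ γ) *ᵥ v) (0, i) = v (0, i) - γ * ∑ j, ξ j / R j j * v (0, j) := by
  rw [aux_split v i _ (1 - γ • vecMulVec (fun _ => 1) (ξ ᵥ* R⁻¹)) 0 0 0
    (fun _ => rfl) (fun _ => rfl) (fun _ => rfl), aux_Rinv R hRdiag hRpos]
  simp only [Matrix.sub_mulVec, Matrix.smul_mulVec, Matrix.one_mulVec, Pi.smul_apply,
    smul_eq_mul, Matrix.zero_mulVec, Pi.zero_apply, Pi.sub_apply, add_zero]
  simp [Matrix.mulVec, dotProduct, Matrix.vecMulVec_apply, Matrix.vecMul_diagonal, div_eq_mul_inv]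

/-- Action of the second diagonal block of `Nmat`. -/
theorem aux_Nblock (hRdiag : ∀ i j, i ≠ j → R i j = 0) (hRpos : ∀ i, 0 < R i i)
    (f : Fin n → ℝ) :
    ((1 - γ • vecMulVec (R⁻¹ *ᵥ fun _ => 1) ξ) *ᵥ f) i = f i - (γ * ∑ j, ξ j * f j) / R i i := by
  rw [aux_Rinv R hRdiag hRpos]
  simp only [Matrix.sub_mulVec, Matrix.smul_mulVec, Matrix.one_mulVec, Pi.smul_apply,
    smul_eq_mul, Pi.sub_apply, Matrix.vecMulVec_mulVec, Matrix.mulVec_diagonal]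
  simp [dotProduct]
  ring

theorem aux_N1 (hRdiag : ∀ i j, i ≠ j → R i j = 0) (hRpos : ∀ i, 0 < R i i) :
    ((Nmat n R ξ γ) *ᵥ v) (1, i) = v (1, i) - (γ * ∑ j, ξ j * v (1, j)) / R i i := by
  rw [aux_split v i _ 0 (1 - γ • vecMulVec (R⁻¹ *ᵥ fun _ => 1) ξ) 0 1
    (fun _ => rfl) (fun _ => rfl) (fun _ => rfl), aux_Nblock R ξ γ i hRdiag hRpos]
  simp

theorem aux_N2 (hRdiag : ∀ i j, i ≠ j → R i j = 0) (hRpos : ∀ i, 0 < R i i) :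
    ((Nmat n R ξ γ) *ᵥ v) (2, i) = v (2, i) - (γ * ∑ j, ξ j * v (2, j)) / R i i := by
  rw [aux_split v i _ 0 0 (1 - γ • vecMulVec (R⁻¹ *ᵥ fun _ => 1) ξ) 2
    (fun _ => rfl) (fun _ => rfl) (fun _ => rfl), aux_Nblock R ξ γ i hRdiag hRpos]
  simp

end

theorem stmt11 (n : ℕ) (hn : 1 ≤ n) (L R : Matrix (Fin n) (Fin n) ℝ)
    (hRdiag : ∀ i j, i ≠ j → R i j = 0) (hRpos : ∀ i, 0 < R i i)
    (τ κ₁ κ₂ p : ℝ) (hτ : τ ≠ 0) (hp0 : 0 < p) (hp2 : p < 2)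
    (ξ : Fin n → ℝ) (hξL : ξ ᵥ* L = 0) (hξ1 : (∑ i, ξ i) = 1)
    (hL1 : L *ᵥ (fun _ => (1 : ℝ)) = 0)
    (γ : ℝ) (hγ : γ⁻¹ = ∑ i, ξ i / R i i)
    (hspec : ∀ μ ∈ spectrum ℂ
        (((Nmat n R ξ γ) * (Amat n L R τ κ₁ κ₂ p)).map ((↑) : ℝ → ℂ)),
        μ ≠ 0 → ‖μ‖ < 1)
    (z0 : Fin 3 × Fin n → ℝ) (z : ℕ → (Fin 3 × Fin n → ℝ))
    (hz : ∀ k, z k = ((Amat n L R τ κ₁ κ₂ p) ^ k) *ᵥ z0) :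
    ∀ i : Fin n,
      Filter.Tendsto
        (fun k : ℕ => z k (0, i)
          - ((γ * ∑ j, ξ j * (z0 (0, j) / R j j + τ * (κ₂ / p ^ 2) * z0 (2, j)))
            + (k : ℝ) * τ * (γ * ∑ j, ξ j * (z0 (1, j) - (κ₂ / p) * z0 (2, j)))))
        Filter.atTop (nhds 0)
      ∧ Filter.Tendsto (fun k : ℕ => z k (1, i)) Filter.atTop
          (nhds ((γ * ∑ j, ξ j * (z0 (1, j) - (κ₂ / p) * z0 (2, j))) / R i i))
      ∧ Filter.Tendsto (fun k : ℕ => z k (2, i)) Filter.atTop (nhds 0) := by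
  haveI : Nonempty (Fin n) := ⟨⟨0, hn⟩⟩
  set A := Amat n L R τ κ₁ κ₂ p with hA
  set N := Nmat n R ξ γ with hN
  have hM : ∀ v i, Filter.Tendsto (fun k : ℕ => (((N * A) ^ k) *ᵥ v) i)
      Filter.atTop (nhds 0) := by
    intro v i
    refine aux_pow_matrix (N * A) (fun μ hμ => ?_) v i
    by_cases h0 : μ = 0
    · simp [h0]
    · exact hspec μ hμ h0
  have A0 := fun v i => aux_A0 L R τ κ₁ κ₂ p v i hRdiag
  have A1 := fun v i => aux_A1 L R τ κ₁ κ₂ p v i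
  have A2 := fun v i => aux_A2 L R τ κ₁ κ₂ p v i
  have N0 := fun v i => aux_N0 R ξ γ v i hRdiag hRpos
  have N1 := fun v i => aux_N1 R ξ γ v i hRdiag hRpos
  have N2 := fun v i => aux_N2 R ξ γ v i hRdiag hRpos
  rw [← hA] at A0 A1 A2
  rw [← hN] at N0 N1 N2
  have hr : ∀ i, R i i ≠ 0 := fun i => (hRpos i).ne'
  have hLrow : ∀ i, ∑ j, L i j = 0 := by
    intro i
    have := congrFun hL1 i
    simpa [Matrix.mulVec, dotProduct] using this
  have hLcol : ∀ f : Fin n → ℝ, ∑ i, ξ i * ∑ j, L i j * f j = 0 := by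
    intro f
    have h : ξ ⬝ᵥ (L *ᵥ f) = 0 := by rw [Matrix.dotProduct_mulVec, hξL]; simp
    simpa [Matrix.mulVec, dotProduct] using h
  -- the three averaged functionals
  obtain ⟨X, hX⟩ : ∃ X : (Fin 3 × Fin n → ℝ) → ℝ,
      ∀ v, X v = γ * ∑ j, ξ j / R j j * v (0, j) := ⟨_, fun _ => rfl⟩
  obtain ⟨S, hS⟩ : ∃ S : (Fin 3 × Fin n → ℝ) → ℝ,
      ∀ v, S v = γ * ∑ j, ξ j * v (1, j) := ⟨_, fun _ => rfl⟩
  obtain ⟨Y, hY⟩ : ∃ Y : (Fin 3 × Fin n → ℝ) → ℝ,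
      ∀ v, Y v = γ * ∑ j, ξ j * v (2, j) := ⟨_, fun _ => rfl⟩
  simp only [← hX] at N0
  simp only [← hS] at N1
  simp only [← hY] at N2
  have XA : ∀ v, X (A *ᵥ v) = X v + τ * S v := by
    intro v
    simp only [hX, hS, A0, Finset.mul_sum, ← Finset.sum_add_distrib]
    refine Finset.sum_congr rfl fun j _ => ?_
    have := hr j
    field_simp
  have SA : ∀ v, S (A *ᵥ v) = S v - κ₂ * Y v := by
    intro v
    have h := hLcol (fun j => v (0, j))
    have h2 : ∑ i, ξ i * (-κ₁ * (∑ j, L i j * v (0, j)) + v (1, i) - κ₂ * v (2, i))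
        = -κ₁ * (∑ i, ξ i * ∑ j, L i j * v (0, j)) + ∑ i, ξ i * v (1, i)
          - κ₂ * ∑ i, ξ i * v (2, i) := by
      rw [Finset.mul_sum, Finset.mul_sum Finset.univ _ κ₂, ← Finset.sum_add_distrib,
        ← Finset.sum_sub_distrib]
      exact Finset.sum_congr rfl fun j _ => by ring
    simp only [hS, hY, A1]
    rw [h2, h]; ring
  have YA : ∀ v, Y (A *ᵥ v) = (1 - p) * Y v := by
    intro v
    have h := hLcol (fun j => v (0, j))
    have h2 : ∑ i, ξ i * (-p * (∑ j, L i j * v (0, j)) + (1 - p) * v (2, i))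
        = -p * (∑ i, ξ i * ∑ j, L i j * v (0, j)) + (1 - p) * ∑ i, ξ i * v (2, i) := by
      rw [Finset.mul_sum, Finset.mul_sum Finset.univ _ (1 - p), ← Finset.sum_add_distrib]
      exact Finset.sum_congr rfl fun j _ => by ring
    simp only [hY, A2]
    rw [h2, h]; ring
  -- γ is nonzero
  have hγ0 : γ ≠ 0 := by
    intro h0
    have hX0 : ∀ v, X v = 0 := fun v => by rw [hX, h0, zero_mul]
    have hS0 : ∀ v, S v = 0 := fun v => by rw [hS, h0, zero_mul]
    have hY0 : ∀ v, Y v = 0 := fun v => by rw [hY, h0, zero_mul]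
    let e : Fin 3 × Fin n → ℝ := fun a => if a.1 = 0 then 1 else 0
    have hNv : ∀ v, N *ᵥ v = v := by
      intro v
      funext ⟨a, i⟩
      fin_cases a
      · simpa [hX0] using N0 v i
      · simpa [hS0] using N1 v i
      · simpa [hY0] using N2 v i
    have hAe : A *ᵥ e = e := by
      funext ⟨a, i⟩
      fin_cases a
      · simpa [e] using A0 e i
      · simpa [e, hLrow] using A1 e i
      · simpa [e, hLrow] using A2 e i
    have hMe : ∀ k : ℕ, ((N * A) ^ k) *ᵥ e = e := by
      intro k
      induction k with
      | zero => simp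
      | succ k ih => rw [pow_succ, ← Matrix.mulVec_mulVec, ← Matrix.mulVec_mulVec, hAe, hNv, ih]
    have h1 := hM e (0, ⟨0, hn⟩)
    simp only [hMe] at h1
    have h2 := tendsto_nhds_unique h1 tendsto_const_nhds
    simp [e] at h2
  have hγ1 : γ * ∑ i, ξ i / R i i = 1 := by rw [← hγ, mul_inv_cancel₀ hγ0]
  have XN : ∀ v, X (N *ᵥ v) = 0 := by
    intro v
    rw [hX]
    simp only [N0, mul_sub, Finset.sum_sub_distrib, ← Finset.sum_mul]
    rw [← hX, ← mul_assoc, hγ1]; ring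
  have hdiv : ∀ c : ℝ, γ * ∑ j, ξ j * (c / R j j) = c := by
    intro c
    calc γ * ∑ j, ξ j * (c / R j j) = (γ * ∑ j, ξ j / R j j) * c := by
          rw [mul_assoc, Finset.sum_mul]
          congr 1
          exact Finset.sum_congr rfl fun j _ => by ring
      _ = c := by rw [hγ1, one_mul]
  have SN : ∀ v, S (N *ᵥ v) = 0 := by
    intro v
    rw [hS]
    simp only [N1, mul_sub, Finset.sum_sub_distrib]
    rw [← hS, hdiv]; ring
  have YN : ∀ v, Y (N *ᵥ v) = 0 := by
    intro v
    rw [hY]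
    simp only [N2, mul_sub, Finset.sum_sub_distrib]
    rw [← hY, hdiv]; ring
  have hLN : ∀ v i, ∑ j, L i j * (N *ᵥ v) (0, j) = ∑ j, L i j * v (0, j) := by
    intro v i
    simp only [N0, mul_sub, Finset.sum_sub_distrib, ← Finset.sum_mul, hLrow]
    ring
  have hcomm : ∀ v, N *ᵥ (A *ᵥ v) = A *ᵥ (N *ᵥ v) := by
    intro v
    funext ⟨a, i⟩
    have := hr i
    fin_cases a
    · change (N *ᵥ (A *ᵥ v)) (0, i) = (A *ᵥ (N *ᵥ v)) (0, i)
      rw [N0, A0, A0, N0, N1, XA]; field_simp; ring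
    · change (N *ᵥ (A *ᵥ v)) (1, i) = (A *ᵥ (N *ᵥ v)) (1, i)
      rw [N1, A1, A1, hLN, N1, N2, SA]; field_simp; ring
    · change (N *ᵥ (A *ᵥ v)) (2, i) = (A *ᵥ (N *ᵥ v)) (2, i)
      rw [N2, A2, A2, hLN, N2, YA]; field_simp; ring
  have hidem : ∀ v, N *ᵥ (N *ᵥ v) = N *ᵥ v := by
    intro v
    funext ⟨a, i⟩
    fin_cases a
    · simpa [XN] using N0 (N *ᵥ v) i
    · simpa [SN] using N1 (N *ᵥ v) i
    · simpa [YN] using N2 (N *ᵥ v) i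
  have hzs : ∀ k, z (k + 1) = A *ᵥ z k := by
    intro k
    rw [hz, hz, pow_succ', Matrix.mulVec_mulVec]
  have hz00 : z 0 = z0 := by rw [hz]; simp
  have hNz : ∀ k, N *ᵥ z k = ((N * A) ^ k) *ᵥ (N *ᵥ z0) := by
    intro k
    induction k with
    | zero => simp [hz00]
    | succ k ih =>
      rw [pow_succ', ← Matrix.mulVec_mulVec, ← ih, ← Matrix.mulVec_mulVec, ← hcomm, hidem, hzs]
  have hlim : ∀ a, Filter.Tendsto (fun k => (N *ᵥ z k) a) Filter.atTop (nhds 0) := by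
    intro a
    simp only [hNz]
    exact hM _ a
  have hYk : ∀ k, Y (z k) = (1 - p) ^ k * Y z0 := by
    intro k
    induction k with
    | zero => simp [hz00]
    | succ k ih => rw [hzs, YA, ih]; ring
  have hYlim : Filter.Tendsto (fun k => Y (z k)) Filter.atTop (nhds 0) := by
    have h := (tendsto_pow_atTop_nhds_zero_of_abs_lt_one (r := 1 - p)
      (by rw [abs_lt]; constructor <;> linarith)).mul_const (Y z0)
    simpa [hYk] using h
  have hp : p ≠ 0 := hp0.ne'
  have hSk : ∀ k, S (z k) - κ₂ / p * Y (z k) = S z0 - κ₂ / p * Y z0 := by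
    intro k
    induction k with
    | zero => simp [hz00]
    | succ k ih => rw [hzs, SA, YA, ← ih]; field_simp; ring
  have hXk : ∀ k : ℕ, X (z k) + τ * (κ₂ / p ^ 2) * Y (z k)
      = X z0 + τ * (κ₂ / p ^ 2) * Y z0 + k * τ * (S z0 - κ₂ / p * Y z0) := by
    intro k
    induction k with
    | zero => simp [hz00]
    | succ k ih =>
      have e : X (z (k + 1)) + τ * (κ₂ / p ^ 2) * Y (z (k + 1))
          = (X (z k) + τ * (κ₂ / p ^ 2) * Y (z k)) + τ * (S (z k) - κ₂ / p * Y (z k)) := by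
        rw [hzs, XA, YA]; field_simp; ring
      rw [e, ih, hSk]; push_cast; ring
  have hrs : γ * ∑ j, ξ j * (z0 (1, j) - (κ₂ / p) * z0 (2, j)) = S z0 - κ₂ / p * Y z0 := by
    rw [hS, hY]
    simp only [Finset.mul_sum, ← Finset.sum_sub_distrib]
    exact Finset.sum_congr rfl fun j _ => by ring
  have hxs : γ * ∑ j, ξ j * (z0 (0, j) / R j j + τ * (κ₂ / p ^ 2) * z0 (2, j))
      = X z0 + τ * (κ₂ / p ^ 2) * Y z0 := by
    rw [hX, hY]
    simp only [Finset.mul_sum, ← Finset.sum_add_distrib]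
    exact Finset.sum_congr rfl fun j _ => by ring
  intro i
  rw [hrs, hxs]
  refine ⟨?_, ?_, ?_⟩
  · have h := (hlim (0, i)).sub (hYlim.const_mul (τ * (κ₂ / p ^ 2)))
    rw [mul_zero, sub_zero] at h
    refine h.congr fun k => ?_
    rw [← hXk k, N0]; ring
  · have h := ((hlim (1, i)).add ((hYlim.const_mul (κ₂ / p)).div_const (R i i))).add_const
      ((S z0 - κ₂ / p * Y z0) / R i i)
    rw [mul_zero, zero_div, zero_add, zero_add] at h
    refine h.congr fun k => ?_
    rw [← hSk k, N1]; ring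
  · have h := (hlim (2, i)).add (hYlim.div_const (R i i))
    rw [zero_div, zero_add] at h
    refine h.congr fun k => ?_
    rw [N2]; ring
end

section
/- Let q be a polynomial over ℂ of degree d ≥ 1 with q(1) ≠ 0, and let Q be the polynomial of degree d determined by Q(s) = (s−1)^d · q((s+1)/(s−1)) for all s ≠ 1 (Q exists and is unique, with leading coefficient q(1)). Then every root of q lies in the open unit disc {λ : |λ| < 1} if and only if every root of Q has strictly negative real part. -/
theorem stmt13_mobius (s : ℂ) (hs : s ≠ 1) : ‖(s + 1) / (s - 1)‖ < 1 ↔ s.re < 0 := by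
  have h : 0 < ‖s - 1‖ := norm_pos_iff.2 (sub_ne_zero.2 hs)
  rw [norm_div, div_lt_one h, ← sq_lt_sq₀ (norm_nonneg _) (norm_nonneg _),
    Complex.sq_norm, Complex.sq_norm, Complex.normSq_apply, Complex.normSq_apply]
  simp only [Complex.add_re, Complex.sub_re, Complex.add_im, Complex.sub_im, Complex.one_re,
    Complex.one_im]
  constructor <;> intro h <;> nlinarith

theorem stmt13_one (d : ℕ) (q Q : Polynomial ℂ)
    (hqdeg : q.natDegree = d) (hq1 : q.eval 1 ≠ 0)
    (hQ : ∀ s : ℂ, s ≠ 1 → Q.eval s = (s - 1) ^ d * q.eval ((s + 1) / (s - 1))) :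
    Q.eval 1 ≠ 0 := by
  have hP : Q = ∑ i ∈ Finset.range (d + 1), Polynomial.C (q.coeff i) *
      (Polynomial.X + 1) ^ i * (Polynomial.X - 1) ^ (d - i) := by
    apply Polynomial.eq_of_infinite_eval_eq
    apply Set.Infinite.mono (s := {(1 : ℂ)}ᶜ)
    · intro s hs
      have hs' : s - 1 ≠ 0 := sub_ne_zero.2 hs
      simp only [Set.mem_setOf_eq]
      rw [hQ s hs, Polynomial.eval_eq_sum_range, hqdeg, Polynomial.eval_finset_sum,
        Finset.mul_sum]
      apply Finset.sum_congr rfl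
      intro i hi
      have hi' : i ≤ d := by simpa [Nat.lt_succ_iff] using hi
      simp only [Polynomial.eval_mul, Polynomial.eval_C, Polynomial.eval_pow,
        Polynomial.eval_add, Polynomial.eval_sub, Polynomial.eval_X, Polynomial.eval_one]
      obtain ⟨k, rfl⟩ := Nat.exists_eq_add_of_le hi'
      rw [Nat.add_sub_cancel_left, pow_add, div_pow]
      field_simp
    · exact (Set.finite_singleton _).infinite_compl
  have hq0 : q ≠ 0 := by rintro rfl; simp at hq1
  rw [hP, Polynomial.eval_finset_sum, Finset.sum_eq_single d]
  · have : q.coeff d ≠ 0 := by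
      rw [← hqdeg]; exact Polynomial.leadingCoeff_ne_zero.2 hq0
    simp only [Polynomial.eval_mul, Polynomial.eval_C, Polynomial.eval_pow,
      Polynomial.eval_add, Polynomial.eval_sub, Polynomial.eval_X, Polynomial.eval_one,
      Nat.sub_self, pow_zero, mul_one]
    exact mul_ne_zero this (pow_ne_zero _ (by norm_num))
  · intro i hi hne
    have hi' : i ≤ d := by simpa [Nat.lt_succ_iff] using hi
    have : d - i ≠ 0 := by omega
    simp [this]
  · simp

theorem stmt13 (d : ℕ) (hd : 1 ≤ d) (q Q : Polynomial ℂ)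
    (hqdeg : q.natDegree = d) (hq1 : q.eval 1 ≠ 0)
    (hQ : ∀ s : ℂ, s ≠ 1 → Q.eval s = (s - 1) ^ d * q.eval ((s + 1) / (s - 1))) :
    (∀ z : ℂ, q.IsRoot z → ‖z‖ < 1) ↔ (∀ z : ℂ, Q.IsRoot z → z.re < 0) := by
  constructor
  · intro h z hz
    have hz1 : z ≠ 1 := by
      rintro rfl
      exact stmt13_one d q Q hqdeg hq1 hQ hz
    rw [← stmt13_mobius z hz1]
    apply h
    have h2 : Q.eval z = 0 := hz
    rw [hQ z hz1] at h2
    exact (mul_eq_zero.1 h2).resolve_left (pow_ne_zero _ (sub_ne_zero.2 hz1))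
  · intro h z hz
    have hz1 : z ≠ 1 := by
      rintro rfl
      exact hq1 hz
    have hz' : z - 1 ≠ 0 := sub_ne_zero.2 hz1
    have e : (z + 1) / (z - 1) - 1 = 2 / (z - 1) := by field_simp; ring
    have e2 : (z + 1) / (z - 1) + 1 = 2 * z / (z - 1) := by field_simp; ring
    have hs : (z + 1) / (z - 1) ≠ 1 := by
      rw [← sub_ne_zero, e]
      exact div_ne_zero two_ne_zero hz'
    have inv : ((z + 1) / (z - 1) + 1) / ((z + 1) / (z - 1) - 1) = z := by
      rw [e, e2]; field_simp
    have key := stmt13_mobius _ hs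
    rw [inv] at key
    rw [key]
    apply h
    have h3 : q.eval z = 0 := hz
    show Q.eval _ = 0
    rw [hQ _ hs, inv, h3, mul_zero]
end

section
/- Let δκ := κ₁ − κ₂ and assume ν > 0, p > 0, δκ > 0, and 2κ₁/(δκp) > 3. Define ω₀ʳ := (4(2−p)/(δκpν) + 2κ₁/(δκp) − 1)/(2κ₁/(δκp) − 3) and ω₀ᶦ := 4/(δκν) + 3 − 4κ₁/(δκp). Then ω₀ʳ < ω₀ᶦ if and only if ν < p(κ₂ − δκ·p)/(κ₁ − δκ·p)². -/
theorem stmt14 (κ₁ κ₂ p ν : ℝ) (hν : 0 < ν) (hp : 0 < p)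
    (hδκ : 0 < κ₁ - κ₂) (hcond : 2 * κ₁ / ((κ₁ - κ₂) * p) > 3) :
    ((4 * (2 - p) / ((κ₁ - κ₂) * p * ν) + 2 * κ₁ / ((κ₁ - κ₂) * p) - 1)
          / (2 * κ₁ / ((κ₁ - κ₂) * p) - 3)
        < 4 / ((κ₁ - κ₂) * ν) + 3 - 4 * κ₁ / ((κ₁ - κ₂) * p))
      ↔ ν < p * (κ₂ - (κ₁ - κ₂) * p) / (κ₁ - (κ₁ - κ₂) * p) ^ 2 := by
  obtain ⟨d, hd⟩ : ∃ d, d = κ₁ - κ₂ := ⟨_, rfl⟩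
  have hk : κ₂ = κ₁ - d := by linarith
  rw [← hd] at hδκ hcond ⊢
  clear hd
  subst hk
  have hdp : 0 < d * p := mul_pos hδκ hp
  have h3 : 3 * (d * p) < 2 * κ₁ := (lt_div_iff₀ hdp).mp hcond
  have hpos : 0 < κ₁ - d * p := by linarith
  have hx : 0 < 2 * κ₁ / (d * p) - 3 := by linarith
  rw [div_lt_iff₀ hx, lt_div_iff₀ (pow_pos hpos 2), ← sub_pos,
    ← sub_pos (b := ν * (κ₁ - d * p) ^ 2)]
  have key : (4 / (d * ν) + 3 - 4 * κ₁ / (d * p)) * (2 * κ₁ / (d * p) - 3)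
      - (4 * (2 - p) / (d * p * ν) + 2 * κ₁ / (d * p) - 1)
      = 8 / (d ^ 2 * p ^ 2 * ν) * (p * (κ₁ - d - d * p) - ν * (κ₁ - d * p) ^ 2) := by
    field_simp
    ring
  rw [key]
  exact mul_pos_iff_of_pos_left (by positivity)
end

section
/- Let ν_1, …, ν_{n−1} be strictly positive real numbers, let τ > 0, and set μ_max := (max_l ν_l)/τ. Then the following are equivalent: (A) |1−p| < 1 and for each l every complex root of g_{ν_l} lies in the open unit disc {λ : |λ| < 1}; (B) the three conditions (i) 0 < p < 2, (ii) 0 < κ₁ − κ₂ < 2κ₁/(3p), and (iii) τ < p(κ₂ − p(κ₁−κ₂))/(μ_max·(κ₁ − p(κ₁−κ₂))²) all hold. -/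
open Polynomial

/-- The cubic polynomial g_ν(λ) = (λ−1)²(λ−1+p) + ((λ−1)κ₁ + p(κ₁−κ₂))ν over ℂ. -/
noncomputable def gPoly (κ₁ κ₂ p : ℝ) (ν : ℂ) : Polynomial ℂ :=
  (X - 1) ^ 2 * (X - 1 + C (p : ℂ))
    + ((X - 1) * C (κ₁ : ℂ) + C ((p : ℂ) * ((κ₁ : ℂ) - (κ₂ : ℂ)))) * C ν

lemma aux_real_root (p a c : ℝ) : ∃ r : ℝ, r ^ 3 + p * r ^ 2 + a * r + c = 0 := by
  set M : ℝ := 1 + |p| + |a| + |c| with hM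
  have hp := abs_nonneg p
  have ha := abs_nonneg a
  have hc := abs_nonneg c
  have hM1 : 1 ≤ M := by linarith
  have hM2 : M ≤ M ^ 2 := by nlinarith
  have hcub : M ^ 3 = M ^ 2 + |p| * M ^ 2 + |a| * M ^ 2 + |c| * M ^ 2 := by
    have : M ^ 3 = M * M ^ 2 := by ring
    rw [this]; nth_rewrite 1 [hM]; ring
  have e1 : |p * M ^ 2| = |p| * M ^ 2 := by rw [abs_mul, abs_of_nonneg (by positivity : 0 ≤ M ^ 2)]
  have e2 : |a * M| ≤ |a| * M ^ 2 := by
    rw [abs_mul, abs_of_nonneg (by linarith : 0 ≤ M)]; gcongr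
  have e3 : |c| ≤ |c| * M ^ 2 := by nlinarith
  have hMsq : 0 ≤ M ^ 2 := by positivity
  have b1 := abs_le.mp e1.le
  have b2 := abs_le.mp e2
  have b3 := abs_le.mp e3
  have hcont : ContinuousOn (fun x : ℝ => x ^ 3 + p * x ^ 2 + a * x + c) (Set.Icc (-M) M) := by
    fun_prop
  have := intermediate_value_Icc (by linarith : -M ≤ M) hcont
  have h0 : (0 : ℝ) ∈ Set.Icc ((-M) ^ 3 + p * (-M) ^ 2 + a * (-M) + c)
      (M ^ 3 + p * M ^ 2 + a * M + c) := by
    constructor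
    · have : (-M) ^ 3 + p * (-M) ^ 2 + a * (-M) + c = -M ^ 3 + p * M ^ 2 - a * M + c := by ring
      rw [this]; linarith [b1.2, b2.1, b3.2]
    · linarith [b1.1, b2.1, b3.1]
  obtain ⟨r, -, hr⟩ := this h0
  exact ⟨r, hr⟩

lemma aux_quad_nec (u v : ℝ)
    (h : ∀ x : ℂ, x ^ 2 + u * x + v = 0 → ‖1 + x‖ < 1) :
    0 < v ∧ 0 < 4 - 2 * u + v ∧ v < u := by
  have hreal : ∀ x : ℝ, x ^ 2 + u * x + v = 0 → -2 < x ∧ x < 0 := by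
    intro x hx
    have h1 := h (x : ℂ) (by exact_mod_cast hx)
    have h2 : ‖(1 : ℂ) + x‖ = |1 + x| := by
      rw [← Real.norm_eq_abs, ← Complex.norm_real]; push_cast; rfl
    rw [h2, abs_lt] at h1
    constructor <;> linarith [h1.1, h1.2]
  rcases le_or_gt 0 (u ^ 2 - 4 * v) with hd | hd
  · set q := Real.sqrt (u ^ 2 - 4 * v) with hq
    have hqq : q ^ 2 = u ^ 2 - 4 * v := Real.sq_sqrt hd
    have h1 := hreal ((-u + q) / 2) (by nlinarith)
    have h2 := hreal ((-u - q) / 2) (by nlinarith)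
    obtain ⟨x, hx⟩ : ∃ x, x = (-u + q) / 2 := ⟨_, rfl⟩
    obtain ⟨y, hy⟩ : ∃ y, y = (-u - q) / 2 := ⟨_, rfl⟩
    rw [← hx] at h1
    rw [← hy] at h2
    have hu : u = -(x + y) := by rw [hx, hy]; ring
    have hv : v = x * y := by rw [hx, hy]; nlinarith
    rw [hu, hv]
    refine ⟨mul_pos_of_neg_of_neg h1.2 h2.2, ?_, ?_⟩
    · nlinarith [mul_pos (by linarith : 0 < x + 2) (by linarith : 0 < y + 2)]
    · nlinarith [mul_pos (by linarith : 0 < x + 2) (by linarith : 0 < -y),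
        mul_pos (by linarith : 0 < y + 2) (by linarith : 0 < -x)]
  · set q := Real.sqrt (4 * v - u ^ 2) with hq
    have hqq : q ^ 2 = 4 * v - u ^ 2 := Real.sq_sqrt (by linarith)
    have h1 := h ⟨-u / 2, q / 2⟩ (by
      apply Complex.ext
      · simp [pow_two]; nlinarith
      · simp [pow_two]; ring)
    have h2 : ‖(1 : ℂ) + ⟨-u / 2, q / 2⟩‖ ^ 2 < 1 := by
      have := norm_nonneg ((1 : ℂ) + ⟨-u / 2, q / 2⟩)
      nlinarith
    rw [← Complex.normSq_eq_norm_sq, Complex.normSq_apply] at h2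
    simp at h2
    refine ⟨by nlinarith [sq_nonneg u], by nlinarith [sq_nonneg (u - 4)], by nlinarith⟩

lemma aux_quad_suf (u v : ℝ) (h1 : 0 < v) (h2 : 0 < 4 - 2 * u + v) (h3 : v < u)
    (x : ℂ) (hx : x ^ 2 + u * x + v = 0) : ‖1 + x‖ < 1 := by
  obtain ⟨s, t⟩ := x
  have hre := congrArg Complex.re hx
  have him := congrArg Complex.im hx
  simp [pow_two] at hre him
  have hn : ‖(1 : ℂ) + ⟨s, t⟩‖ ^ 2 < 1 := by
    rw [← Complex.normSq_eq_norm_sq, Complex.normSq_apply]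
    simp
    have : t * (2 * s + u) = 0 := by linarith
    rcases mul_eq_zero.mp this with ht | hs
    · subst ht
      have hs0 : s < 0 := by
        by_contra hs
        push Not at hs
        nlinarith [mul_nonneg hs hs, mul_nonneg hs (by linarith : 0 ≤ u)]
      have hs2 : -2 < s := by
        by_contra hs
        push Not at hs
        nlinarith [mul_nonneg (by linarith : 0 ≤ -2 - s) (by linarith : 0 ≤ -2 - s),
          mul_nonneg (by linarith : 0 ≤ -2 - s) (by linarith : 0 ≤ 4 - u)]
      nlinarith [mul_pos (by linarith : 0 < -s) (by linarith : 0 < 2 + s)]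
    · have : u = -2 * s := by linarith
      subst this
      nlinarith
  have := norm_nonneg ((1 : ℂ) + ⟨s, t⟩)
  nlinarith

lemma aux_cubic (p a c : ℝ) (hp2 : p < 2) :
    (∀ x : ℂ, x ^ 3 + p * x ^ 2 + a * x + c = 0 → ‖1 + x‖ < 1) ↔
      (0 < c ∧ 3 * c < 2 * a ∧ (a - c) ^ 2 < p * (a - c) - c) := by
  obtain ⟨r, hr⟩ := aux_real_root p a c
  obtain ⟨ρ, rfl⟩ : ∃ ρ, r = -ρ := ⟨-r, by ring⟩
  obtain ⟨u, hu⟩ : ∃ u, u = p - ρ := ⟨_, rfl⟩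
  obtain ⟨v, hv⟩ : ∃ v, v = a - ρ * u := ⟨_, rfl⟩
  have hp : p = u + ρ := by linarith
  have ha : a = v + ρ * u := by linarith
  have hc : c = ρ * v := by rw [hp, ha] at hr; nlinarith
  have hfac : ∀ x : ℂ, x ^ 3 + p * x ^ 2 + a * x + c = (x + ρ) * (x ^ 2 + u * x + v) := by
    intro x; rw [hp, ha, hc]; push_cast; ring
  have hdet : p * (a - c) - c - (a - c) ^ 2
      = (u - v) * (ρ ^ 2 + u * ρ * (1 - ρ) + v * (1 - ρ) ^ 2) := by
    rw [hp, ha, hc]; ring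
  have hrn : ‖(1 : ℂ) + -(ρ : ℂ)‖ = |1 - ρ| := by
    rw [← Real.norm_eq_abs, ← Complex.norm_real]; push_cast; ring_nf
  constructor
  · intro h
    obtain ⟨h1, h2, h3⟩ := aux_quad_nec u v (fun x hx => h x (by rw [hfac, hx, mul_zero]))
    have h4 := h (-(ρ : ℂ)) (by rw [hfac]; ring)
    rw [hrn, abs_lt] at h4
    have hρ0 : 0 < ρ := by linarith
    have hρ2 : ρ < 2 := by linarith
    have k1 : 0 < ρ ^ 2 + u * ρ * (1 - ρ) + v * (1 - ρ) ^ 2 := by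
      rcases le_or_gt ρ 1 with h | h
      · have : 0 ≤ u * ρ * (1 - ρ) := by
          apply mul_nonneg (mul_nonneg _ _) <;> linarith
        positivity
      · have := mul_pos hρ0 (mul_pos (by linarith : 0 < ρ - 1) h2)
        have := mul_pos h1 (mul_pos (by linarith : 0 < ρ - 1) (by linarith : 0 < 2 - ρ))
        nlinarith
    refine ⟨by rw [hc]; positivity, ?_, ?_⟩
    · rw [hc, ha]
      nlinarith [mul_pos hρ0 (by linarith : 0 < u - v), mul_pos h1 (by linarith : 0 < 2 - ρ)]
    · have := mul_pos (by linarith : 0 < u - v) k1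
      linarith
  · rintro ⟨h1, h2, h3⟩
    have hac : 0 < a - c := by linarith
    have hp0 : 0 < p := by
      by_contra hh
      push Not at hh
      nlinarith [mul_nonneg (by linarith : 0 ≤ -p) hac.le, sq_nonneg (a - c)]
    have ha0 : 0 < a := by linarith
    have hρ0 : 0 < ρ := by
      by_contra hh
      push Not at hh
      have e : (-ρ) ^ 3 + p * (-ρ) ^ 2 + a * (-ρ) + c > 0 := by
        have : 0 ≤ -ρ := by linarith
        positivity
      linarith
    have hρ2 : ρ < 2 := by
      by_contra hh
      push Not at hh
      nlinarith [mul_nonneg (sq_nonneg ρ) (by linarith : 0 ≤ ρ - p),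
        mul_nonneg ha0.le (by linarith : 0 ≤ ρ - 2)]
    have hv0 : 0 < v := by
      rw [hc] at h1
      exact (mul_pos_iff_of_pos_left hρ0).mp h1
    have hB : 0 < 4 * p - 4 * a + 3 * c := by
      have e : (2 * a - 3 * c) * (4 * p - 4 * a + 3 * c)
        = 8 * (p * (a - c) - c - (a - c) ^ 2) + c * (8 - 4 * p + 2 * a - c) := by ring
      have e2 : 0 < c * (8 - 4 * p + 2 * a - c) := mul_pos h1 (by linarith)
      exact (mul_pos_iff_of_pos_left (by linarith : 0 < 2 * a - 3 * c)).mp (by linarith)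
    have hH : 0 < ρ ^ 2 + u * ρ * (1 - ρ) + v * (1 - ρ) ^ 2 := by
      have e : 4 * (ρ ^ 2 + u * ρ * (1 - ρ) + v * (1 - ρ) ^ 2)
          = ρ * (4 * p - 4 * a + 3 * c) + v * (2 - ρ) ^ 2 := by
        rw [hp, ha, hc]; ring
      have : 0 < ρ * (4 * p - 4 * a + 3 * c) + v * (2 - ρ) ^ 2 := by positivity
      linarith
    have huv : v < u := by
      have : 0 < u - v := (mul_pos_iff_of_pos_right hH).mp (by linarith)
      linarith
    have h4 : 0 < 4 - 2 * u + v := by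
      have e : (2 - ρ) * (4 - 2 * u + v) = 8 - 4 * p + 2 * a - c := by
        rw [hp, ha, hc]; ring
      exact (mul_pos_iff_of_pos_left (by linarith : 0 < 2 - ρ)).mp (by linarith)
    intro x hx
    rw [hfac] at hx
    rcases mul_eq_zero.mp hx with hx | hx
    · rw [eq_neg_of_add_eq_zero_left hx, hrn, abs_lt]
      constructor <;> linarith
    · exact aux_quad_suf u v hv0 h4 huv x hx

theorem stmt15 (n : ℕ) (hn : 2 ≤ n) (κ₁ κ₂ p τ : ℝ)
    (ν : Fin (n - 1) → ℝ) (hν : ∀ l, 0 < ν l) (hτ : 0 < τ)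
    (μmax : ℝ) (hμ : IsGreatest (Set.range fun l => ν l / τ) μmax) :
    (|1 - p| < 1
      ∧ ∀ l, ∀ z : ℂ, (gPoly κ₁ κ₂ p ((ν l : ℝ) : ℂ)).IsRoot z → ‖z‖ < 1)
    ↔ (0 < p ∧ p < 2
        ∧ 0 < κ₁ - κ₂ ∧ κ₁ - κ₂ < 2 * κ₁ / (3 * p)
        ∧ τ < p * (κ₂ - p * (κ₁ - κ₂)) / (μmax * (κ₁ - p * (κ₁ - κ₂)) ^ 2)) := by
  have hroot : ∀ (l) , (∀ z : ℂ, (gPoly κ₁ κ₂ p ((ν l : ℝ) : ℂ)).IsRoot z → ‖z‖ < 1) ↔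
      (∀ x : ℂ, x ^ 3 + p * x ^ 2 + ((κ₁ * ν l : ℝ) : ℂ) * x
        + ((p * (κ₁ - κ₂) * ν l : ℝ) : ℂ) = 0 → ‖1 + x‖ < 1) := by
    intro l
    have key : ∀ x : ℂ, (gPoly κ₁ κ₂ p ((ν l : ℝ) : ℂ)).IsRoot (1 + x) ↔
        x ^ 3 + p * x ^ 2 + ((κ₁ * ν l : ℝ) : ℂ) * x
        + ((p * (κ₁ - κ₂) * ν l : ℝ) : ℂ) = 0 := by
      intro x
      simp only [gPoly, Polynomial.IsRoot.def, eval_add, eval_mul, eval_pow, eval_sub, eval_X,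
        eval_one, eval_C]
      push_cast
      ring_nf
    constructor
    · intro h x hx
      exact h _ ((key x).mpr hx)
    · intro h z hz
      have := h (z - 1) ((key (z - 1)).mp (by simpa using hz))
      simpa using this
  obtain ⟨⟨l₀, hl₀⟩, hmax⟩ := hμ
  have hl₀' : ν l₀ = μmax * τ := by
    have : ν l₀ / τ = μmax := hl₀
    rw [← this]; field_simp
  have hle : ∀ l, ν l ≤ ν l₀ := by
    intro l
    have h1 : ν l / τ ≤ μmax := hmax ⟨l, rfl⟩
    rw [hl₀']
    exact (div_le_iff₀ hτ).mp h1
  have hμ0 : 0 < μmax := by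
    have := hν l₀
    rw [hl₀'] at this
    exact (mul_pos_iff_of_pos_right hτ).mp this
  have hp_iff : |1 - p| < 1 ↔ 0 < p ∧ p < 2 := by
    rw [abs_lt]
    constructor <;> rintro ⟨h1, h2⟩ <;> constructor <;> linarith
  rw [hp_iff, and_assoc]
  refine and_congr_right fun hp0 => and_congr_right fun hp2 => ?_
  simp only [hroot, aux_cubic p _ _ hp2]
  have hcond : ∀ l, (0 < p * (κ₁ - κ₂) * ν l ∧ 3 * (p * (κ₁ - κ₂) * ν l) < 2 * (κ₁ * ν l)
      ∧ (κ₁ * ν l - p * (κ₁ - κ₂) * ν l) ^ 2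
        < p * (κ₁ * ν l - p * (κ₁ - κ₂) * ν l) - p * (κ₁ - κ₂) * ν l)
      ↔ (0 < κ₁ - κ₂ ∧ 3 * p * (κ₁ - κ₂) < 2 * κ₁
        ∧ ν l * (κ₁ - p * (κ₁ - κ₂)) ^ 2 < p * (κ₂ - p * (κ₁ - κ₂))) := by
    intro l
    have hl := hν l
    refine and_congr ?_ (and_congr ?_ ?_)
    · rw [mul_pos_iff_of_pos_right hl, mul_pos_iff_of_pos_left hp0]
    · rw [show 3 * (p * (κ₁ - κ₂) * ν l) = (3 * p * (κ₁ - κ₂)) * ν l by ring,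
        show 2 * (κ₁ * ν l) = (2 * κ₁) * ν l by ring, mul_lt_mul_iff_left₀ hl]
    · rw [show (κ₁ * ν l - p * (κ₁ - κ₂) * ν l) ^ 2
          = (ν l * (κ₁ - p * (κ₁ - κ₂)) ^ 2) * ν l by ring,
        show p * (κ₁ * ν l - p * (κ₁ - κ₂) * ν l) - p * (κ₁ - κ₂) * ν l
          = (p * (κ₂ - p * (κ₁ - κ₂))) * ν l by ring, mul_lt_mul_iff_left₀ hl]
  simp only [hcond]
  have hred : (∀ l, 0 < κ₁ - κ₂ ∧ 3 * p * (κ₁ - κ₂) < 2 * κ₁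
        ∧ ν l * (κ₁ - p * (κ₁ - κ₂)) ^ 2 < p * (κ₂ - p * (κ₁ - κ₂)))
      ↔ (0 < κ₁ - κ₂ ∧ 3 * p * (κ₁ - κ₂) < 2 * κ₁
        ∧ ν l₀ * (κ₁ - p * (κ₁ - κ₂)) ^ 2 < p * (κ₂ - p * (κ₁ - κ₂))) := by
    constructor
    · intro h
      exact h l₀
    · rintro ⟨h1, h2, h3⟩ l
      exact ⟨h1, h2, lt_of_le_of_lt (mul_le_mul_of_nonneg_right (hle l) (sq_nonneg _)) h3⟩
  rw [hred]
  refine and_congr_right fun hd => ?_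
  have h2 : κ₁ - κ₂ < 2 * κ₁ / (3 * p) ↔ 3 * p * (κ₁ - κ₂) < 2 * κ₁ := by
    rw [lt_div_iff₀ (by positivity), mul_comm]
  rw [h2]
  refine and_congr_right fun h3 => ?_
  have hpd := mul_pos hp0 hd
  have hpos : 0 < κ₁ - p * (κ₁ - κ₂) := by linarith
  rw [lt_div_iff₀ (by positivity), hl₀',
    show τ * (μmax * (κ₁ - p * (κ₁ - κ₂)) ^ 2) = μmax * τ * (κ₁ - p * (κ₁ - κ₂)) ^ 2 by ring]
end

section
/- Assume 0 < p < 2 and fix a real constant w̃ (the mean aggregate measurement noise). Let scalars (s̃_k, ỹ_k) evolve as s̃_{k+1} = s̃_k − κ₂·ỹ_k + κ₁·w̃ and ỹ_{k+1} = (1−p)·ỹ_k + p·w̃. Then ỹ_k → w̃, s̃_{k+1} − s̃_k → (κ₁−κ₂)·w̃, and s̃_k/k → (κ₁−κ₂)·w̃ as k → ∞. In particular, if κ₁ ≠ κ₂ and w̃ ≠ 0 then |s̃_k| → ∞ (the collective frequency drifts without bound), while if w̃ = 0 then s̃_k converges. -/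
theorem stmt17 (κ₁ κ₂ p w : ℝ) (hp0 : 0 < p) (hp2 : p < 2)
    (s y : ℕ → ℝ)
    (hs : ∀ k, s (k + 1) = s k - κ₂ * y k + κ₁ * w)
    (hy : ∀ k, y (k + 1) = (1 - p) * y k + p * w) :
    Filter.Tendsto y Filter.atTop (nhds w)
    ∧ Filter.Tendsto (fun k => s (k + 1) - s k) Filter.atTop (nhds ((κ₁ - κ₂) * w))
    ∧ Filter.Tendsto (fun k : ℕ => s k / (k : ℝ)) Filter.atTop (nhds ((κ₁ - κ₂) * w))
    ∧ ((κ₁ ≠ κ₂ ∧ w ≠ 0) →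
        Filter.Tendsto (fun k => |s k|) Filter.atTop Filter.atTop)
    ∧ (w = 0 → ∃ c : ℝ, Filter.Tendsto s Filter.atTop (nhds c)) := by
  have hr : Filter.Tendsto (fun k : ℕ => (1 - p) ^ k) Filter.atTop (nhds 0) :=
    tendsto_pow_atTop_nhds_zero_of_abs_lt_one (abs_lt.2 ⟨by linarith, by linarith⟩)
  have hyk : ∀ k, y k = w + (y 0 - w) * (1 - p) ^ k := by
    intro k
    induction k with
    | zero => simp
    | succ k ih => rw [hy, ih]; ring
  obtain ⟨C, hC⟩ : ∃ C, C * p = κ₂ * (y 0 - w) :=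
    ⟨κ₂ * (y 0 - w) / p, by field_simp⟩
  have hsk : ∀ k : ℕ, s k = (s 0 - C + C * (1 - p) ^ k) + k * ((κ₁ - κ₂) * w) := by
    intro k
    induction k with
    | zero => simp
    | succ k ih =>
      rw [hs, hyk, ih]; push_cast
      linear_combination (1 - p) ^ k * hC
  have hyt : Filter.Tendsto y Filter.atTop (nhds w) := by
    have := (hr.const_mul (y 0 - w)).const_add w
    simp only [mul_zero, add_zero] at this
    exact this.congr fun k => (hyk k).symm
  have hb : Filter.Tendsto (fun k : ℕ => s 0 - C + C * (1 - p) ^ k) Filter.atTop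
      (nhds (s 0 - C)) := by
    simpa using (hr.const_mul C).const_add (s 0 - C)
  have hdiv : Filter.Tendsto (fun k : ℕ => s k / (k : ℝ)) Filter.atTop
      (nhds ((κ₁ - κ₂) * w)) := by
    have h := (hb.div_atTop (tendsto_natCast_atTop_atTop (R := ℝ))).add_const ((κ₁ - κ₂) * w)
    rw [zero_add] at h
    refine h.congr' ?_
    filter_upwards [Filter.eventually_gt_atTop 0] with k hk
    have : (k : ℝ) ≠ 0 := by positivity
    rw [hsk k]; field_simp
  refine ⟨hyt, ?_, hdiv, ?_, ?_⟩
  · have h := (hyt.const_mul κ₂).const_sub (κ₁ * w)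
    rw [← sub_mul] at h
    refine h.congr fun k => ?_
    rw [hs]; ring
  · rintro ⟨h1, h2⟩
    have hm : 0 < |(κ₁ - κ₂) * w| := abs_pos.2 (mul_ne_zero (sub_ne_zero.2 h1) h2)
    have h := hdiv.abs.pos_mul_atTop hm (tendsto_natCast_atTop_atTop (R := ℝ))
    refine h.congr' ?_
    filter_upwards [Filter.eventually_gt_atTop 0] with k hk
    have : (0 : ℝ) < k := by positivity
    rw [abs_div, abs_of_pos this]; field_simp
  · intro hw
    refine ⟨s 0 - C, hb.congr fun k => ?_⟩
    rw [hsk k, hw]; simp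
end

section
/- Assume κ₁ ≠ κ₂, p ≠ 0, τ ≠ 0, and let R be a diagonal n×n matrix with positive diagonal entries. Let δw ∈ ℝ^n. If (δx, δs, δy) ∈ (ℝ^n)³ is a fixed point of the deviation dynamics, i.e. δx = δx + τ·R·δs, δs = −κ₁·L·δx + δs − κ₂·δy + κ₁·δw, and δy = −p·L·δx + (1−p)·δy + p·δw, then δs = 0, δy = 0, and L·δx = δw. -/
open Matrix

theorem stmt18 (n : ℕ) (hn : 1 ≤ n) (L R : Matrix (Fin n) (Fin n) ℝ)
    (hRdiag : ∀ i j, i ≠ j → R i j = 0) (hRpos : ∀ i, 0 < R i i)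
    (τ κ₁ κ₂ p : ℝ) (hκ : κ₁ ≠ κ₂) (hp : p ≠ 0) (hτ : τ ≠ 0)
    (δw δx δs δy : Fin n → ℝ)
    (h1 : δx = δx + τ • (R *ᵥ δs))
    (h2 : δs = (-κ₁) • (L *ᵥ δx) + δs - κ₂ • δy + κ₁ • δw)
    (h3 : δy = (-p) • (L *ᵥ δx) + (1 - p) • δy + p • δw) :
    δs = 0 ∧ δy = 0 ∧ L *ᵥ δx = δw := by
  have e3 : ∀ i, δy i = δw i - (L *ᵥ δx) i := by
    intro i
    have h := congrFun h3 i
    simp only [Pi.add_apply, Pi.smul_apply, smul_eq_mul] at h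
    apply mul_left_cancel₀ hp
    linarith
  have e2 : ∀ i, δy i = 0 := by
    intro i
    have h := congrFun h2 i
    have h' := e3 i
    simp only [Pi.add_apply, Pi.sub_apply, Pi.smul_apply, smul_eq_mul] at h
    have h4 : (κ₁ - κ₂) * δy i = 0 := by
      linear_combination κ₁ * h' - h
    exact (mul_eq_zero.mp h4).resolve_left (sub_ne_zero.mpr hκ)
  refine ⟨?_, funext e2, ?_⟩
  · funext i
    have h := congrFun h1 i
    have hR : (R *ᵥ δs) i = R i i * δs i := by
      simp only [Matrix.mulVec, dotProduct]
      apply Finset.sum_eq_single i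
      · intro j _ hj
        rw [hRdiag i j (Ne.symm hj), zero_mul]
      · intro hi
        exact absurd (Finset.mem_univ i) hi
    simp only [Pi.add_apply, Pi.smul_apply, smul_eq_mul, hR] at h
    have h4 : τ * (R i i * δs i) = 0 := by linarith
    have h5 := (mul_eq_zero.mp h4).resolve_left hτ
    exact (mul_eq_zero.mp h5).resolve_left (hRpos i).ne'
  · funext i
    linarith [e3 i, e2 i]
end
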